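/- Let P be a finite-volume right-angled convex hyperbolic 3-polyhedron with at most one ideal vertex (v_∞(P) ≤ 1). Then P has at least 12 faces: a₂(P) ≥ 12. -/

import Mathlib

open scoped BigOperators

noncomputable section

/-- The Minkowski bilinear form `⟨x,y⟩ = -x₀y₀ + x₁y₁ + ⋯ + xₙyₙ` on `ℝ^{n+1}`. -/
def mink {n : ℕ} (x y : Fin (n + 1) → ℝ) : ℝ :=
  -(x 0 * y 0) + ∑ i : Fin n, x i.succ * y i.succ

/-- The hyperboloid model of the hyperbolic space `ℍⁿ`. -/
def Hyperboloid (n : ℕ) : Set (Fin (n + 1) → ℝ) :=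
  {x | mink x x = -1 ∧ 0 < x 0}

/-- The Klein projection `x ↦ (x₁/x₀, …, xₙ/x₀)` of the hyperboloid onto the unit ball. -/
def kleinMap {n : ℕ} (x : Fin (n + 1) → ℝ) : EuclideanSpace ℝ (Fin n) :=
  WithLp.toLp 2 (fun i => x i.succ / x 0)

/-- Dimension of a subset of a real vector space: the rank of its vector span. -/
def sdim {n : ℕ} (s : Set (EuclideanSpace ℝ (Fin n))) : ℕ :=
  Module.finrank ℝ (vectorSpan ℝ s)

/-- A convex hyperbolic `n`-polyhedron: a finite intersection of hyperbolic half-spaces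
`H_{eᵢ}⁻ = {x : ⟨eᵢ,x⟩ ≤ 0}` (with `⟨eᵢ,eᵢ⟩ = 1`) having nonempty interior
(equivalently, its Klein-model image has nonempty interior in `ℝⁿ`). -/
structure HypPolyhedron (n : ℕ) where
  m : ℕ
  e : Fin m → (Fin (n + 1) → ℝ)
  unit : ∀ i, mink (e i) (e i) = 1
  nonempty_int :
    (interior (kleinMap '' {x ∈ Hyperboloid n | ∀ i, mink (e i) x ≤ 0})).Nonempty

namespace HypPolyhedron

variable {n : ℕ} (P : HypPolyhedron n)

/-- The set of points of the polyhedron in the hyperboloid model. -/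
def carrier : Set (Fin (n + 1) → ℝ) :=
  {x ∈ Hyperboloid n | ∀ i, mink (P.e i) x ≤ 0}

/-- `P̄`: the closure of the Klein-model image of the polyhedron in the closed unit ball. -/
def cl : Set (EuclideanSpace ℝ (Fin n)) :=
  closure (kleinMap '' P.carrier)

/-- The `k`-faces of `P`: the `k`-dimensional (nonempty) exposed faces of `P̄`. -/
def faces (k : ℕ) : Set (Set (EuclideanSpace ℝ (Fin n))) :=
  {F | IsExposed ℝ P.cl F ∧ F.Nonempty ∧ sdim F = k}

/-- `a_k(P)`: the number of `k`-faces of `P`. -/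
def a (k : ℕ) : ℕ := (P.faces k).ncard

/-- Vertices of `P`: the points of `0`-dimensional exposed faces of `P̄`. -/
def verts : Set (EuclideanSpace ℝ (Fin n)) :=
  {v | IsExposed ℝ P.cl {v}}

/-- Ideal vertices: vertices lying on the unit sphere. -/
def idealVerts : Set (EuclideanSpace ℝ (Fin n)) :=
  {v ∈ P.verts | ‖v‖ = 1}

/-- Finite vertices: vertices lying in the open unit ball. -/
def finiteVerts : Set (EuclideanSpace ℝ (Fin n)) :=
  {v ∈ P.verts | ‖v‖ < 1}

/-- `v_∞(P)`: the number of ideal vertices of `P`. -/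
def vInf : ℕ := P.idealVerts.ncard

/-- The bounding hyperplane `H_e` contains the face `F`. -/
def faceInHyperplane (e : Fin (n + 1) → ℝ) (F : Set (EuclideanSpace ℝ (Fin n))) : Prop :=
  ∀ x ∈ P.carrier, kleinMap x ∈ F → mink e x = 0

/-- `P` is right-angled: whenever two distinct bounding hyperplanes both contain an
`(n-2)`-dimensional face of `P`, the corresponding unit normals are orthogonal,
i.e. the dihedral angle is `π/2`. -/
def IsRightAngled : Prop :=
  ∀ i j : Fin P.m, i ≠ j →
    (∃ F ∈ P.faces (n - 2), P.faceInHyperplane (P.e i) F ∧ P.faceInHyperplane (P.e j) F) →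
    mink (P.e i) (P.e j) = 0

/-- `P` has finite volume: `P̄` is the convex hull of its (finitely many) vertices. -/
def FiniteVolume : Prop :=
  P.verts.Finite ∧ P.cl = convexHull ℝ P.verts

/-- `P` is compact: finite volume and all vertices are finite. -/
def IsCompactPoly : Prop :=
  P.FiniteVolume ∧ ∀ v ∈ P.verts, ‖v‖ < 1

/-- `P` is ideal: finite volume and all vertices are ideal. -/
def IsIdeal : Prop :=
  P.FiniteVolume ∧ ∀ v ∈ P.verts, ‖v‖ = 1

end HypPolyhedron

/-- `ν(P) = a_{n-1}(P) + v_∞(P)` ranging over the family `𝒫ⁿ` of finite-volume non-compact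
right-angled convex hyperbolic `n`-polyhedra. -/
def nuSet (n : ℕ) : Set ℕ :=
  {m | ∃ P : HypPolyhedron n,
        P.FiniteVolume ∧ P.IsRightAngled ∧ ¬ P.IsCompactPoly ∧ P.a (n - 1) + P.vInf = m}

/-- `νₙ = sInf {ν(P) : P ∈ 𝒫ⁿ}` (with `sInf ∅ = 0`). -/
def nu (n : ℕ) : ℕ := sInf (nuSet n)

/-!
In a polyhedron cut out by irredundant walls, any two normals are orthogonal or have Minkowski
product at most `-1`: a product strictly in between would make the walls meet along an edge at an
angle other than `π/2`. So the combinatorics is that of the graph of orthogonal pairs of walls.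
Edges of `P` are adjacent pairs of walls, and the common neighbours of such a pair are the faces
through the finite ends of the edge. These are never adjacent to
each other, and an induced `4`-cycle exists only among the four walls through the ideal vertex.

Take a face `f` not meeting the edges out of the ideal vertex. Its neighbours cannot close up
after three or four steps, and across each edge of this first ring lies a face of a second layer,
touching `f` nowhere; these faces are pairwise distinct. If `f` has at least six neighbours, the
two layers together with `f` already contain `12` faces. If it has five, this gives `11` faces,
and were there no others, the second layer would have to close up to a pentagon with no face
left to fill it.
-/

section RightAngledPatterns

variable {ι : Type*} {G : SimpleGraph ι} {C : Set ι} {a b c d f p q : ι}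

/-- `a b c d` is an induced `4`-cycle of `G`. -/
structure IsInducedSquare (G : SimpleGraph ι) (a b c d : ι) : Prop where
  adj_ab : G.Adj a b
  adj_bc : G.Adj b c
  adj_cd : G.Adj c d
  adj_da : G.Adj d a
  ne_ac : a ≠ c
  ne_bd : b ≠ d
  not_adj_ac : ¬ G.Adj a c
  not_adj_bd : ¬ G.Adj b d

lemma IsInducedSquare.rotate (h : IsInducedSquare G a b c d) : IsInducedSquare G b c d a :=
  ⟨h.adj_bc, h.adj_cd, h.adj_da, h.adj_ab, h.ne_bd, h.ne_ac.symm, h.not_adj_bd,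
    fun hca => h.not_adj_ac hca.symm⟩

/-- The combinatorics of the faces of a right-angled `3`-polyhedron with at most one ideal
vertex: `G` is adjacency along edges and `C` is the set of faces through the ideal vertex.
A common neighbour of two adjacent faces is a face through an endpoint of their common edge. -/
structure RightAngledPattern (G : SimpleGraph ι) (C : Set ι) : Prop where
  exists_adj : ∀ i, ∃ j, G.Adj i j
  nontrivial_commonNeighbors : ∀ {i j}, G.Adj i j → ¬ (i ∈ C ∧ j ∈ C) →
    (G.commonNeighbors i j).Nontrivial
  existsUnique_commonNeighbor : ∀ {i j}, G.Adj i j → i ∈ C → j ∈ C →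
    ∃! k, k ∈ G.commonNeighbors i j
  isIndepSet_commonNeighbors : ∀ {i j}, G.Adj i j → G.IsIndepSet (G.commonNeighbors i j)
  mem_of_isInducedSquare : ∀ {i j k l}, IsInducedSquare G i j k l → i ∈ C
  commonNeighbors_subset : ∀ {i j}, i ∈ C → j ∈ C → i ≠ j → ¬ G.Adj i j →
    G.commonNeighbors i j ⊆ C
  exists_isInducedSquare : C.Nonempty →
    ∃ a b c d, IsInducedSquare G a b c d ∧ C = {a, b, c, d}

/-- A face away from the cusp and from the second endpoints of the edges ending at the cusp. -/
def IsGood (G : SimpleGraph ι) (C : Set ι) (f : ι) : Prop :=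
  f ∉ C ∧ ∀ a ∈ C, ∀ b ∈ C, G.Adj a b → f ∉ G.commonNeighbors a b

/-- The faces through the cusp are exactly those of the induced `4`-cycle `a b c d`. -/
structure IsCuspSquare (G : SimpleGraph ι) (C : Set ι) (a b c d : ι) : Prop
    extends IsInducedSquare G a b c d where
  eq_insert : C = {a, b, c, d}

namespace IsCuspSquare

lemma mem_iff (h : IsCuspSquare G C a b c d) {x : ι} :
    x ∈ C ↔ x = a ∨ x = b ∨ x = c ∨ x = d := by
  simp only [h.eq_insert, Set.mem_insert_iff, Set.mem_singleton_iff]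

lemma rotate (h : IsCuspSquare G C a b c d) : IsCuspSquare G C b c d a where
  toIsInducedSquare := h.toIsInducedSquare.rotate
  eq_insert := by
    ext x
    simp only [h.mem_iff, Set.mem_insert_iff, Set.mem_singleton_iff]
    tauto

lemma notMem_of_mem_commonNeighbors (h : IsCuspSquare G C a b c d)
    (hp : p ∈ G.commonNeighbors a b) : p ∉ C := by
  rw [h.mem_iff]
  rintro (rfl | rfl | rfl | rfl)
  exacts [hp.1.ne rfl, hp.2.ne rfl, h.not_adj_ac hp.1, h.not_adj_bd hp.2]

lemma not_adj_opposite (h : IsCuspSquare G C a b c d) (hG : RightAngledPattern G C)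
    (hp : p ∉ C) (hap : G.Adj a p) : ¬ G.Adj c p := fun hcp =>
  hp (hG.commonNeighbors_subset (h.mem_iff.2 (by simp)) (h.mem_iff.2 (by simp)) h.ne_ac
    h.not_adj_ac ⟨hap, hcp⟩)

lemma not_adj_outer_opposite (h : IsCuspSquare G C a b c d) (hG : RightAngledPattern G C)
    (hp : p ∈ G.commonNeighbors a b) (hq : q ∈ G.commonNeighbors c d) :
    p ≠ q ∧ ¬ G.Adj p q := by
  have hpC := h.notMem_of_mem_commonNeighbors hp
  have hqC := h.rotate.rotate.notMem_of_mem_commonNeighbors hq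
  have hcp := h.not_adj_opposite hG hpC hp.1
  have hbq := fun hbq => h.rotate.not_adj_opposite hG hqC hbq hq.2
  refine ⟨?_, fun hpq => hpC (hG.mem_of_isInducedSquare ⟨hp.2.symm, h.adj_bc, hq.1, hpq.symm,
    ?_, ?_, fun hpc => hcp hpc.symm, hbq⟩)⟩
  · rintro rfl
    exact hcp hq.1
  · rintro rfl
    exact hpC (h.mem_iff.2 (by simp))
  · rintro rfl
    exact hqC (h.mem_iff.2 (by simp))

lemma adj_or_adj_of_not_isGood (h : IsCuspSquare G C a b c d) (hp : p ∉ C)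
    (hgood : ¬ IsGood G C p) : G.Adj a p ∨ G.Adj c p := by
  simp only [IsGood, not_and, not_forall, not_not] at hgood
  obtain ⟨u, hu, v, hv, huv, hup, hvp⟩ := hgood hp
  rcases h.mem_iff.1 hu with rfl | rfl | rfl | rfl
  · exact .inl hup
  · rcases h.mem_iff.1 hv with rfl | rfl | rfl | rfl
    exacts [.inl hvp, (huv.ne rfl).elim, .inr hvp, (h.not_adj_bd huv).elim]
  · exact .inr hup
  · rcases h.mem_iff.1 hv with rfl | rfl | rfl | rfl
    exacts [.inl hvp, (h.not_adj_bd huv.symm).elim, .inr hvp, (huv.ne rfl).elim]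

lemma adj_outer_consecutive (h : IsCuspSquare G C a b c d) (hG : RightAngledPattern G C)
    (hno : ∀ f, ¬ IsGood G C f) (hp : p ∈ G.commonNeighbors a b)
    (hq : q ∈ G.commonNeighbors b c) : G.Adj p q := by
  have ha : a ∈ C := h.mem_iff.2 (by simp)
  have hb : b ∈ C := h.mem_iff.2 (by simp)
  have hc : c ∈ C := h.mem_iff.2 (by simp)
  have hpC := h.notMem_of_mem_commonNeighbors hp
  obtain ⟨y, ⟨hpy, hby⟩, hya⟩ :=
    (hG.nontrivial_commonNeighbors hp.2.symm fun hpb => hpC hpb.1).exists_ne a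
  have hyC : y ∉ C := by
    rw [h.mem_iff]
    rintro (rfl | rfl | rfl | rfl)
    exacts [hya rfl, hby.ne rfl, h.not_adj_opposite hG hpC hp.1 hpy.symm, h.not_adj_bd hby]
  rcases h.adj_or_adj_of_not_isGood hyC (hno y) with hay | hcy
  · have hyp := (hG.existsUnique_commonNeighbor h.adj_ab ha hb).unique ⟨hay, hby⟩ hp
    exact (hpy.ne hyp.symm).elim
  · have hyq := (hG.existsUnique_commonNeighbor h.adj_bc hb hc).unique ⟨hby, hcy⟩ hq
    exact hyq ▸ hpy

end IsCuspSquare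

/-- Consecutive faces `n k`, `n (k + 1)`, … around the face `f`. -/
structure Encircles (G : SimpleGraph ι) (f : ι) (n : ℕ → ι) : Prop where
  adj_center : ∀ k, G.Adj f (n k)
  adj_succ : ∀ k, G.Adj (n k) (n (k + 1))
  ne_add_two : ∀ k, n k ≠ n (k + 2)

namespace RightAngledPattern

lemma exists_commonNeighbor (hG : RightAngledPattern G C) (hab : G.Adj a b) :
    ∃ p, p ∈ G.commonNeighbors a b := by
  by_cases hC : a ∈ C ∧ b ∈ C
  · exact (hG.existsUnique_commonNeighbor hab hC.1 hC.2).exists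
  · exact (hG.nontrivial_commonNeighbors hab hC).nonempty

lemma not_adj_of_mem_commonNeighbors (hG : RightAngledPattern G C) (hab : G.Adj a b)
    (hp : p ∈ G.commonNeighbors a b) (hq : q ∈ G.commonNeighbors a b) : ¬ G.Adj p q :=
  fun hpq => hG.isIndepSet_commonNeighbors hab hp hq hpq.ne hpq

lemma exists_isGood [Nonempty ι] (hG : RightAngledPattern G C) : ∃ f, IsGood G C f := by
  by_contra! hno
  rcases C.eq_empty_or_nonempty with rfl | hC
  · exact hno (Classical.arbitrary ι) ⟨Set.notMem_empty _, fun _ ha => ha.elim⟩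
  obtain ⟨a, b, c, d, hsq, hC⟩ := hG.exists_isInducedSquare hC
  have h : IsCuspSquare G C a b c d := ⟨hsq, hC⟩
  obtain ⟨p, hp⟩ := hG.exists_commonNeighbor h.adj_ab
  obtain ⟨q, hq⟩ := hG.exists_commonNeighbor h.adj_bc
  obtain ⟨r, hr⟩ := hG.exists_commonNeighbor h.adj_cd
  obtain ⟨s, hs⟩ := hG.exists_commonNeighbor h.adj_da
  have hpr := h.not_adj_outer_opposite hG hp hr
  have hqs := h.rotate.not_adj_outer_opposite hG hq hs
  refine h.notMem_of_mem_commonNeighbors hp (hG.mem_of_isInducedSquare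
    ⟨h.adj_outer_consecutive hG hno hp hq, h.rotate.adj_outer_consecutive hG hno hq hr,
      h.rotate.rotate.adj_outer_consecutive hG hno hr hs,
      h.rotate.rotate.rotate.adj_outer_consecutive hG hno hs hp,
      hpr.1, hqs.1, hpr.2, hqs.2⟩)

lemma ncard_le_four (hG : RightAngledPattern G C) : C.ncard ≤ 4 := by
  classical
  rcases C.eq_empty_or_nonempty with rfl | hC
  · simp
  · obtain ⟨a, b, c, d, -, hC⟩ := hG.exists_isInducedSquare hC
    rw [hC, show ({a, b, c, d} : Set ι) = ({a, b, c, d} : Finset ι) by push_cast; rfl,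
      Set.ncard_coe_finset]
    exact Finset.card_le_four

lemma exists_encircles (hG : RightAngledPattern G C) (hf : f ∉ C) :
    ∃ n, Encircles G f n := by
  obtain ⟨x, hx⟩ := hG.exists_adj f
  obtain ⟨y, hy⟩ := hG.exists_commonNeighbor hx
  have exists_next : ∀ e : {e : ι × ι // G.Adj f e.1 ∧ e.2 ∈ G.commonNeighbors f e.1},
      ∃ e' : {e : ι × ι // G.Adj f e.1 ∧ e.2 ∈ G.commonNeighbors f e.1},
        e'.1.1 = e.1.2 ∧ e'.1.2 ≠ e.1.1 := by
    rintro ⟨⟨u, v⟩, hu, hfv, huv⟩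
    obtain ⟨w, hw, hwu⟩ :=
      (hG.nontrivial_commonNeighbors hfv fun hC => hf hC.1).exists_ne u
    exact ⟨⟨(v, w), hfv, hw⟩, rfl, hwu⟩
  choose next next_fst next_snd using exists_next
  let edge (k : ℕ) := next^[k] ⟨(x, y), hx, hy⟩
  have edge_succ (k : ℕ) : edge (k + 1) = next (edge k) := Function.iterate_succ_apply' next k _
  refine ⟨fun k => (edge k).1.1, fun k => (edge k).2.1, fun k => ?_, fun k => ?_⟩
  · simp only [edge_succ, next_fst]
    exact (edge k).2.2.2
  · simp only [edge_succ, next_fst]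
    exact (next_snd (edge k)).symm

end RightAngledPattern

lemma Encircles.not_adj_add_two {n : ℕ → ι} (hn : Encircles G f n)
    (hG : RightAngledPattern G C) (k : ℕ) :
    ¬ G.Adj (n k) (n (k + 2)) :=
  hG.not_adj_of_mem_commonNeighbors (hn.adj_center (k + 1))
    ⟨hn.adj_center k, (hn.adj_succ k).symm⟩ ⟨hn.adj_center (k + 2), hn.adj_succ (k + 1)⟩

namespace IsGood

variable {n : ℕ → ι}

lemma not_adj_add_three (hf : IsGood G C f) (hG : RightAngledPattern G C) (hn : Encircles G f n)
    (k : ℕ) : ¬ G.Adj (n k) (n (k + 3)) := fun hadj => by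
  have hsq : IsInducedSquare G (n k) (n (k + 1)) (n (k + 2)) (n (k + 3)) :=
    ⟨hn.adj_succ k, hn.adj_succ _, hn.adj_succ _, hadj.symm, hn.ne_add_two k, hn.ne_add_two _,
      hn.not_adj_add_two hG k, hn.not_adj_add_two hG _⟩
  exact hf.2 _ (hG.mem_of_isInducedSquare hsq) _ (hG.mem_of_isInducedSquare hsq.rotate)
    hsq.adj_ab ⟨(hn.adj_center k).symm, (hn.adj_center _).symm⟩

lemma ne_of_lt_of_le (hf : IsGood G C f) (hG : RightAngledPattern G C) (hn : Encircles G f n)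
    {i j : ℕ} (hij : i < j) (hji : j ≤ i + 4) : n i ≠ n j := by
  obtain rfl | rfl | rfl | rfl : j = i + 1 ∨ j = i + 2 ∨ j = i + 3 ∨ j = i + 4 := by omega
  · exact (hn.adj_succ i).ne
  · exact hn.ne_add_two i
  · exact fun h => hn.not_adj_add_two hG (i + 1) (h ▸ (hn.adj_succ i).symm)
  · exact fun h => hf.not_adj_add_three hG hn (i + 1) (h ▸ (hn.adj_succ i).symm)

lemma exists_across (hf : IsGood G C f) (hG : RightAngledPattern G C) (ha : G.Adj f a)
    (hb : G.Adj f b) (hab : G.Adj a b) :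
    ∃ m ≠ f, ¬ G.Adj f m ∧ ∀ x, G.Adj f x → (G.Adj m x ↔ x = a ∨ x = b) := by
  obtain ⟨m, ⟨ham, hbm⟩, hmf⟩ := (hG.nontrivial_commonNeighbors hab fun hC =>
    hf.2 a hC.1 b hC.2 hab ⟨ha.symm, hb.symm⟩).exists_ne f
  have hfm := hG.not_adj_of_mem_commonNeighbors hab ⟨ha.symm, hb.symm⟩ ⟨ham, hbm⟩
  refine ⟨m, hmf, hfm, fun x hx => ⟨fun hmx => ?_, ?_⟩⟩
  · by_contra! hne
    have adj_of_adj {y} (hfy : G.Adj f y) (hym : G.Adj y m) (hxy : x ≠ y) : G.Adj y x := by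
      by_contra hyx
      exact hf.1 (hG.mem_of_isInducedSquare
        ⟨hfy, hym, hmx, hx.symm, hmf.symm, hxy.symm, hfm, hyx⟩)
    exact hG.not_adj_of_mem_commonNeighbors hab ⟨ha.symm, hb.symm⟩
      ⟨adj_of_adj ha ham hne.1, adj_of_adj hb hbm hne.2⟩ hx
  · rintro (rfl | rfl)
    exacts [ham.symm, hbm.symm]

end IsGood

/-- A first layer `v` of neighbours of `f` and a second layer `m` of faces across the edges
joining `v (s e)` and `v (t e)`. -/
structure IsTwoLayer (G : SimpleGraph ι) {α β : Type*} (f : ι) (v : α → ι) (s t : β → α)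
    (m : β → ι) : Prop where
  injective_inner : Function.Injective v
  injective_outer : Function.Injective m
  adj_inner : ∀ i, G.Adj f (v i)
  outer_ne : ∀ e, m e ≠ f
  not_adj_outer : ∀ e, ¬ G.Adj f (m e)
  outer_adj_inner_iff : ∀ e i, G.Adj (m e) (v i) ↔ i = s e ∨ i = t e

section TwoLayer

variable {α β : Type*} {v : α → ι} {s t : β → α} {m : β → ι}

lemma IsGood.exists_isTwoLayer (hf : IsGood G C f) (hG : RightAngledPattern G C)
    (hv : Function.Injective v) (hfv : ∀ i, G.Adj f (v i))
    (hadj : ∀ e, G.Adj (v (s e)) (v (t e)))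
    (hst : Function.Injective fun e => s(s e, t e)) : ∃ m, IsTwoLayer G f v s t m := by
  choose m hmf hfm hm using fun e => hf.exists_across hG (hfv (s e)) (hfv (t e)) (hadj e)
  have hmv (e : β) (i : α) : G.Adj (m e) (v i) ↔ i = s e ∨ i = t e := by
    rw [hm e _ (hfv i), hv.eq_iff, hv.eq_iff]
  refine ⟨m, hv, fun e e' h => hst (Sym2.ext fun i => ?_), hfv, hmf, hfm, hmv⟩
  rw [Sym2.mem_iff, Sym2.mem_iff, ← hmv, ← hmv, h]

lemma IsTwoLayer.inner_ne_outer (h : IsTwoLayer G f v s t m) (i : α) (e : β) : v i ≠ m e :=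
  fun hie => h.not_adj_outer e (hie ▸ h.adj_inner i)

lemma IsTwoLayer.injective_elim (h : IsTwoLayer G f v s t m) :
    Function.Injective fun o : Option (α ⊕ β) => o.elim f (Sum.elim v m) := by
  rw [Option.injective_iff]
  refine ⟨h.injective_inner.sumElim h.injective_outer h.inner_ne_outer, ?_⟩
  rintro ⟨i | e, hie⟩
  exacts [(h.adj_inner i).ne hie.symm, h.outer_ne e hie]

end TwoLayer

/-- A face with exactly five neighbours around it, and the second layer beyond them. -/
abbrev IsPentagon (G : SimpleGraph ι) (f : ι) (v m : Fin 5 → ι) : Prop :=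
  IsTwoLayer G f v id (· + 1) m

namespace IsPentagon

variable {v m : Fin 5 → ι}

lemma outer_not_adj_add_two (h : IsPentagon G f v m) (hG : RightAngledPattern G C)
    (hf : IsGood G C f) (hv : ∀ i, G.Adj (v i) (v (i + 1))) (i : Fin 5) :
    ¬ G.Adj (m i) (m (i + 2)) := fun hadj => by
  have hmv := h.outer_adj_inner_iff
  have hsq : IsInducedSquare G (v (i + 1)) (v (i + 1 + 1)) (m (i + 2)) (m i) :=
    ⟨hv _, ((hmv _ _).2 (by grind)).symm, hadj.symm, (hmv _ _).2 (by grind),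
      h.inner_ne_outer _ _, h.inner_ne_outer _ _,
      fun h' => absurd ((hmv _ _).1 h'.symm) (by grind),
      fun h' => absurd ((hmv _ _).1 h'.symm) (by grind)⟩
  exact hf.2 _ (hG.mem_of_isInducedSquare hsq) _ (hG.mem_of_isInducedSquare hsq.rotate)
    hsq.adj_ab ⟨(h.adj_inner _).symm, (h.adj_inner _).symm⟩

lemma outer_adj_succ (h : IsPentagon G f v m) (hG : RightAngledPattern G C)
    (hcover : ∀ x, x = f ∨ (∃ i, x = v i) ∨ ∃ i, x = m i)
    {i : Fin 5} (hi : m i ∉ C) : G.Adj (m i) (m (i + 1)) := by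
  have hmv := h.outer_adj_inner_iff
  obtain ⟨x, ⟨hmx, hvx⟩, hx⟩ := (hG.nontrivial_commonNeighbors ((hmv i (i + 1)).2 (.inr rfl))
    fun hC => hi hC.1).exists_ne (v i)
  obtain rfl | ⟨j, rfl⟩ | ⟨j, rfl⟩ := hcover x
  · exact (h.not_adj_outer i hmx.symm).elim
  · rcases (hmv i j).1 hmx with rfl | rfl
    exacts [(hx rfl).elim, (hvx.ne rfl).elim]
  · rcases (hmv j (i + 1)).1 hvx.symm with hj | hj
    · exact (hj : i + 1 = j) ▸ hmx
    · exact (hmx.ne (congrArg m (add_right_cancel hj))).elim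

lemma twelve_le_card [Fintype ι] (h : IsPentagon G f v m) (hG : RightAngledPattern G C)
    (hf : IsGood G C f) (hv : ∀ i, G.Adj (v i) (v (i + 1))) : 12 ≤ Fintype.card ι := by
  by_contra! hlt
  have hcover : ∀ x, x = f ∨ (∃ i, x = v i) ∨ ∃ i, x = m i := by
    have hsurj := h.injective_elim.bijective_of_nat_card_le (by simpa using Nat.le_of_lt_succ hlt)
    intro x
    obtain ⟨_ | i | i, rfl⟩ := hsurj.2 x
    exacts [.inl rfl, .inr (.inl ⟨i, rfl⟩), .inr (.inr ⟨i, rfl⟩)]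
  obtain ⟨i, hi⟩ : ∃ i, m i ∉ C := by
    by_contra! hall
    have hle := (Set.ncard_le_ncard (Set.range_subset_iff.2 hall) (Set.toFinite C)).trans
      hG.ncard_le_four
    rw [← Set.image_univ, Set.ncard_image_of_injective _ h.injective_outer] at hle
    simp at hle
  have hmv := h.outer_adj_inner_iff
  have hmm := h.outer_not_adj_add_two hG hf hv
  obtain ⟨x, ⟨h₁, h₂⟩, hx⟩ := (hG.nontrivial_commonNeighbors
    (h.outer_adj_succ hG hcover hi) fun hC => hi hC.1).exists_ne (v (i + 1))
  obtain rfl | ⟨j, rfl⟩ | ⟨j, rfl⟩ := hcover x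
  · exact h.not_adj_outer i h₁.symm
  · have hj₁ := (hmv _ _).1 h₁
    have hj₂ := (hmv _ _).1 h₂
    exact hx (congrArg v (by grind))
  · obtain rfl | rfl | rfl | rfl | hj :
        j = i ∨ j = i + 1 ∨ j = i + 2 ∨ i = j + 2 ∨ i + 1 = j + 2 := by grind
    exacts [h₁.ne rfl, h₂.ne rfl, hmm _ h₁, hmm _ h₁.symm, hmm _ (hj ▸ h₂.symm)]

end IsPentagon

theorem RightAngledPattern.twelve_le_card [Fintype ι] [Nonempty ι]
    (hG : RightAngledPattern G C) : 12 ≤ Fintype.card ι := by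
  obtain ⟨f, hf⟩ := hG.exists_isGood
  obtain ⟨n, hn⟩ := hG.exists_encircles hf.1
  have hne {i j : ℕ} := hf.ne_of_lt_of_le hG hn (i := i) (j := j)
  by_cases hclosed : n 5 = n 0
  · have hv (i : Fin 5) : G.Adj (n i) (n ↑(i + 1)) := by
      have hadj := hn.adj_succ i
      fin_cases i <;> simpa [hclosed] using hadj
    obtain ⟨m, hm⟩ := hf.exists_isTwoLayer hG (v := fun i : Fin 5 => n i) (s := id) (t := (· + 1))
      (Function.Injective.of_lt_imp_ne fun i j hij => hne hij (by omega)) (fun i => hn.adj_center i)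
      hv (by decide)
    exact IsPentagon.twelve_le_card hm hG hf hv
  · have hinj : Function.Injective fun i : Fin 6 => n i := by
      refine Function.Injective.of_lt_imp_ne fun i j hij => ?_
      by_cases hj : (j : ℕ) ≤ i + 4
      · exact hne hij hj
      · obtain ⟨hi, hj⟩ : (i : ℕ) = 0 ∧ (j : ℕ) = 5 := by omega
        simpa only [hi, hj] using Ne.symm hclosed
    obtain ⟨m, hm⟩ := hf.exists_isTwoLayer hG hinj (fun i => hn.adj_center i)
      (s := Fin.castSucc) (t := Fin.succ) (fun e => hn.adj_succ e) (by decide)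
    simpa using Fintype.card_le_of_injective _ hm.injective_elim

end RightAngledPatterns

section Minkowski

variable {n : ℕ} {x y : Fin (n + 1) → ℝ}

/-- `mink` as a bilinear form, through which it inherits the lemmas on linear maps. -/
def minkForm (n : ℕ) : LinearMap.BilinForm ℝ (Fin (n + 1) → ℝ) :=
  LinearMap.mk₂ ℝ mink
    (fun x y z => by simp only [mink, Pi.add_apply, add_mul, Finset.sum_add_distrib]; ring)
    (fun r x y => by
      simp only [mink, Pi.smul_apply, smul_eq_mul, mul_assoc, mul_add, mul_neg, Finset.mul_sum])
    (fun x y z => by simp only [mink, Pi.add_apply, mul_add, Finset.sum_add_distrib]; ring)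
    (fun r x y => by
      simp only [mink, Pi.smul_apply, smul_eq_mul, mul_left_comm _ r, mul_add, mul_neg,
        Finset.mul_sum])

@[simp] lemma minkForm_apply (x y : Fin (n + 1) → ℝ) : minkForm n x y = mink x y := rfl

lemma mink_comm (x y : Fin (n + 1) → ℝ) : mink x y = mink y x := by
  simp only [mink, mul_comm]

@[simp] lemma mink_add_left (x y z : Fin (n + 1) → ℝ) : mink (x + y) z = mink x z + mink y z :=
  (minkForm n).map_add₂ x y z

@[simp] lemma mink_add_right (x y z : Fin (n + 1) → ℝ) : mink x (y + z) = mink x y + mink x z :=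
  (minkForm n x).map_add y z

@[simp] lemma mink_smul_left (r : ℝ) (x y : Fin (n + 1) → ℝ) : mink (r • x) y = r * mink x y :=
  (minkForm n).map_smul₂ r x y

@[simp] lemma mink_smul_right (r : ℝ) (x y : Fin (n + 1) → ℝ) : mink x (r • y) = r * mink x y :=
  (minkForm n x).map_smul r y

@[simp] lemma mink_neg_left (x y : Fin (n + 1) → ℝ) : mink (-x) y = -mink x y :=
  (minkForm n).map_neg₂ x y

@[simp] lemma mink_neg_right (x y : Fin (n + 1) → ℝ) : mink x (-y) = -mink x y :=
  (minkForm n x).map_neg y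

@[simp] lemma mink_sub_left (x y z : Fin (n + 1) → ℝ) : mink (x - y) z = mink x z - mink y z :=
  (minkForm n).map_sub₂ x y z

@[simp] lemma mink_sub_right (x y z : Fin (n + 1) → ℝ) : mink x (y - z) = mink x y - mink x z :=
  (minkForm n x).map_sub y z

@[simp] lemma mink_zero_left (x : Fin (n + 1) → ℝ) : mink 0 x = 0 :=
  (minkForm n).map_zero₂ x

@[simp] lemma mink_zero_right (x : Fin (n + 1) → ℝ) : mink x 0 = 0 :=
  (minkForm n x).map_zero

lemma mink_sum_left {κ : Type*} (s : Finset κ) (f : κ → Fin (n + 1) → ℝ) (x : Fin (n + 1) → ℝ) :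
    mink (∑ i ∈ s, f i) x = ∑ i ∈ s, mink (f i) x :=
  (minkForm n).map_sum₂ s f x

lemma mink_sum_right {κ : Type*} (s : Finset κ) (x : Fin (n + 1) → ℝ) (f : κ → Fin (n + 1) → ℝ) :
    mink x (∑ i ∈ s, f i) = ∑ i ∈ s, mink x (f i) :=
  map_sum (minkForm n x) f s

lemma mink_single_zero (x : Fin (n + 1) → ℝ) : mink (Pi.single 0 1) x = -x 0 := by
  simp [mink]

lemma mink_self_nonneg (h : x 0 = 0) : 0 ≤ mink x x := by
  simp only [mink, h, mul_zero, neg_zero, zero_add]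
  exact Finset.sum_nonneg fun i _ => mul_self_nonneg _

lemma eq_zero_of_mink_self_nonpos (h : x 0 = 0) (hx : mink x x ≤ 0) : x = 0 := by
  have hsum := le_antisymm hx (mink_self_nonneg h)
  simp only [mink, h, mul_zero, neg_zero, zero_add] at hsum
  rw [Finset.sum_eq_zero_iff_of_nonneg fun i _ => mul_self_nonneg _] at hsum
  funext i
  exact Fin.cases h (fun j => by simpa using hsum j (Finset.mem_univ j)) i

lemma smul_eq_smul_of_causal (hx : mink x x ≤ 0) (hy : mink y y ≤ 0) (hxy : mink x y = 0) :
    x 0 • y = y 0 • x := by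
  rw [← sub_eq_zero]
  apply eq_zero_of_mink_self_nonpos
  · simp [mul_comm]
  · simp only [mink_sub_left, mink_sub_right, mink_smul_left, mink_smul_right, hxy,
      mink_comm y x]
    nlinarith [mul_nonneg (sq_nonneg (x 0)) (neg_nonneg.2 hy),
      mul_nonneg (sq_nonneg (y 0)) (neg_nonneg.2 hx)]

lemma eq_zero_of_mink_timelike_eq_zero (hx : mink x x < 0) (hy : mink y y ≤ 0)
    (hxy : mink x y = 0) : y = 0 := by
  have h := congrArg (mink x) (smul_eq_smul_of_causal hx.le hy hxy)
  rw [mink_smul_right, mink_smul_right, hxy, mul_zero, eq_comm, mul_eq_zero] at h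
  exact eq_zero_of_mink_self_nonpos (h.resolve_right hx.ne) hy

variable {κ : Type*} [Fintype κ]

lemma exists_ne_zero_forall_mink_eq_zero (hκ : Fintype.card κ < n + 1)
    (v : κ → Fin (n + 1) → ℝ) : ∃ d, d ≠ 0 ∧ ∀ k, mink (v k) d = 0 := by
  have hker : (LinearMap.pi fun k => minkForm n (v k)).ker ≠ ⊥ :=
    LinearMap.ker_ne_bot_of_finrank_lt (by simpa using hκ)
  obtain ⟨d, hd, hd0⟩ := Submodule.exists_mem_ne_zero_of_ne_bot hker
  exact ⟨d, hd0, congrFun (LinearMap.mem_ker.1 hd)⟩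

lemma exists_ne_zero_zero_eq_zero_forall_mink_eq_zero (hκ : Fintype.card κ < n)
    (v : κ → Fin (n + 1) → ℝ) : ∃ d, d ≠ 0 ∧ d 0 = 0 ∧ ∀ k, mink (v k) d = 0 := by
  obtain ⟨d, hd, h⟩ := exists_ne_zero_forall_mink_eq_zero (κ := Option κ) (by simpa using hκ)
    (fun o => o.elim (Pi.single 0 1) v)
  exact ⟨d, hd, by simpa [mink_single_zero] using h none, fun k => h (some k)⟩

lemma eq_zero_of_forall_mink_eq_zero (hκ : Fintype.card κ = n + 1) {v w : κ → Fin (n + 1) → ℝ}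
    (hne : ∀ k, mink (v k) (w k) ≠ 0) (hvw : Pairwise fun k l => mink (v k) (w l) = 0)
    (hx : ∀ k, mink (v k) x = 0) : x = 0 := by
  classical
  let T := LinearMap.pi fun k => minkForm n (v k)
  have hsurj : Function.Surjective T := fun c => by
    refine ⟨∑ k, (c k / mink (v k) (w k)) • w k, funext fun k => ?_⟩
    simp only [T, LinearMap.pi_apply, minkForm_apply, mink_sum_right, mink_smul_right]
    rw [Finset.sum_eq_single k (fun l _ hl => by rw [hvw hl.symm, mul_zero]) (by simp),
      div_mul_cancel₀ _ (hne k)]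
  exact (LinearMap.injective_iff_surjective_of_finrank_eq_finrank (by simp [hκ])).2 hsurj
    (funext fun k => by simpa [T] using hx k)

end Minkowski

section LinearInequalities

/-- A subsystem of minimal cardinality among those equivalent to `S` works: if the inequality `k`
could fail while the others hold at `v`, then the line from `v` to `p` meets `f k = 0` in the
required point. -/
lemma exists_irredundant_subsystem {V ι : Type*} [AddCommGroup V] [Module ℝ V]
    (W : Submodule ℝ V) (S : Finset ι) (f : ι → V →ₗ[ℝ] ℝ) {p : V} (hpW : p ∈ W)
    (hp : ∀ l ∈ S, f l p < 0) :
    ∃ J ⊆ S, (∀ v ∈ W, (∀ l ∈ J, f l v ≤ 0) → ∀ l ∈ S, f l v ≤ 0) ∧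
      ∀ k ∈ J, ∃ z ∈ W, f k z = 0 ∧ ∀ l ∈ J, l ≠ k → f l z < 0 := by
  classical
  obtain ⟨J, ⟨hJS, hJ⟩, hmin⟩ := exists_minimal_of_wellFoundedLT
    (fun J => J ⊆ S ∧ ∀ v ∈ W, (∀ l ∈ J, f l v ≤ 0) → ∀ l ∈ S, f l v ≤ 0)
    ⟨S, subset_rfl, fun _ _ h => h⟩
  refine ⟨J, hJS, hJ, fun k hk => ?_⟩
  obtain ⟨v, hvW, hv, l₀, hl₀, hlv⟩ : ∃ v ∈ W, (∀ l ∈ J.erase k, f l v ≤ 0) ∧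
      ∃ l ∈ S, 0 < f l v := by
    by_contra! hall
    exact Finset.notMem_erase k J (hmin ⟨(Finset.erase_subset k J).trans hJS, hall⟩
      (Finset.erase_subset k J) hk)
  have hkv : 0 < f k v := by
    by_contra! hkv
    refine (hJ v hvW (fun l hl => ?_) l₀ hl₀).not_gt hlv
    obtain rfl | hlk := eq_or_ne l k
    exacts [hkv, hv l (Finset.mem_erase.2 ⟨hlk, hl⟩)]
  refine ⟨f k v • p - f k p • v, W.sub_mem (W.smul_mem _ hpW) (W.smul_mem _ hvW), ?_,
    fun l hl hlk => ?_⟩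
  · simp [mul_comm]
  · simp only [map_sub, map_smul, smul_eq_mul]
    nlinarith [mul_pos hkv (neg_pos.2 (hp l (hJS hl))),
      mul_nonneg_of_nonpos_of_nonpos (hp k (hJS hk)).le (hv l (Finset.mem_erase.2 ⟨hlk, hl⟩))]

lemma exists_pos_forall_add_mul_neg {ι : Type*} (J : Finset ι) (a b : ι → ℝ)
    (h : ∀ l ∈ J, a l < 0) : ∃ ε > 0, ∀ l ∈ J, a l + ε * b l < 0 := by
  have hev : ∀ᶠ ε in nhdsWithin (0 : ℝ) (Set.Ioi 0), ∀ l ∈ J, a l + ε * b l < 0 := by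
    rw [Filter.eventually_all_finset]
    intro l hl
    have hcont : Continuous fun ε : ℝ => a l + ε * b l := by fun_prop
    exact (hcont.continuousAt.eventually_lt continuousAt_const
      (by simpa using h l hl)).filter_mono nhdsWithin_le_nhds
  obtain ⟨ε, hε, hpos⟩ := (hev.and self_mem_nhdsWithin).exists
  exact ⟨ε, hpos, hε⟩

end LinearInequalities

section KleinModel

variable {n : ℕ} (x z : Fin (n + 1) → ℝ) (y w : EuclideanSpace ℝ (Fin n)) (t : ℝ)

/-- The spatial part `(x₁, …, xₙ)` of a vector of Minkowski space. -/
def spatial : (Fin (n + 1) → ℝ) →ₗ[ℝ] EuclideanSpace ℝ (Fin n) :=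
  (WithLp.linearEquiv 2 ℝ (Fin n → ℝ)).symm.toLinearMap ∘ₗ LinearMap.funLeft ℝ ℝ Fin.succ

/-- The point `(1, y)` of Minkowski space over a point `y` of the Klein model. -/
def lift : Fin (n + 1) → ℝ := Fin.cons 1 fun i => y i

/-- The vector `(0, w)` of Minkowski space; it is the difference of two lifts. -/
def horizontal : Fin (n + 1) → ℝ := Fin.cons 0 fun i => w i

@[simp] lemma lift_zero : lift y 0 = 1 := rfl

@[simp] lemma horizontal_zero : horizontal w 0 = 0 := rfl

@[simp] lemma spatial_lift : spatial (lift y) = y := rfl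

@[simp] lemma spatial_horizontal : spatial (horizontal w) = w := rfl

variable {x z} in
lemma ext_spatial (h0 : x 0 = z 0) (h : spatial x = spatial z) : x = z :=
  funext <| Fin.cases h0 fun i => congrArg (fun v : EuclideanSpace ℝ (Fin n) => v i) h

lemma mink_eq : mink x z = -(x 0 * z 0) + inner ℝ (spatial x) (spatial z) := by
  simp [mink, spatial, PiLp.inner_apply, mul_comm]

lemma mink_lift : mink x (lift y) = -x 0 + inner ℝ (spatial x) y := by
  rw [mink_eq, lift_zero, spatial_lift, mul_one]

lemma mink_horizontal : mink x (horizontal w) = inner ℝ (spatial x) w := by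
  rw [mink_eq, horizontal_zero, spatial_horizontal, mul_zero, neg_zero, zero_add]

lemma mink_lift_lift : mink (lift y) (lift y) = ‖y‖ ^ 2 - 1 := by
  rw [mink_lift, lift_zero, spatial_lift, real_inner_self_eq_norm_sq]
  ring

lemma lift_add_smul : lift (y + t • w) = lift y + t • horizontal w := by
  refine ext_spatial (by simp) ?_
  ext i
  simp [spatial, lift, horizontal]

lemma lift_sub : lift y - lift w = horizontal (y - w) := by
  refine ext_spatial (by simp) ?_
  ext i
  simp [spatial, lift, horizontal]

variable {a b : ℝ} in
lemma lift_convex (hab : a + b = 1) : lift (a • y + b • w) = a • lift y + b • lift w := by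
  refine ext_spatial (by simp [hab]) ?_
  ext i
  simp [spatial, lift]

variable {x} in
lemma horizontal_spatial (hx : x 0 = 0) : horizontal (spatial x) = x :=
  ext_spatial (by simp [hx]) rfl

variable {x} in
lemma lift_kleinMap (hx : 0 < x 0) : lift (kleinMap x) = (x 0)⁻¹ • x := by
  refine ext_spatial (by simp [hx.ne']) ?_
  ext i
  simp [spatial, lift, kleinMap, div_eq_inv_mul]

lemma kleinMap_smul_lift (ht : t ≠ 0) : kleinMap (t • lift y) = y := by
  ext i
  simp [kleinMap, lift, ht]

variable {x} in
lemma norm_kleinMap_sq (hx : 0 < x 0) : ‖kleinMap x‖ ^ 2 = 1 + (x 0)⁻¹ ^ 2 * mink x x := by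
  have h := mink_lift_lift (kleinMap x)
  rw [lift_kleinMap hx, mink_smul_left, mink_smul_right] at h
  linarith

variable {x} in
lemma mink_lift_kleinMap_eq_zero (hx : 0 < x 0) :
    mink z (lift (kleinMap x)) = 0 ↔ mink z x = 0 := by
  simp [lift_kleinMap hx, hx.ne']

@[fun_prop]
lemma continuous_mink_lift : Continuous fun y : EuclideanSpace ℝ (Fin n) => mink x (lift y) := by
  simp only [mink_lift]
  fun_prop

variable {x} in
lemma spatial_ne_zero (hx : 0 < mink x x) : spatial x ≠ 0 := fun h => by
  rw [mink_eq, h, inner_zero_left] at hx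
  nlinarith [mul_self_nonneg (x 0)]

end KleinModel

lemma infinite_inter_sphere {E : Type*} [NormedAddCommGroup E] [NormedSpace ℝ E]
    (hE : 1 < Module.rank ℝ E) {s : E} (hs : ‖s‖ = 1) {U : Set E} (hU : U ∈ nhds s) :
    (U ∩ Metric.sphere 0 1).Infinite := by
  have hs' : s ∈ Metric.sphere (0 : E) 1 := mem_sphere_zero_iff_norm.2 hs
  have hnt : (Metric.sphere (0 : E) 1).Nontrivial :=
    ⟨s, hs', -s, by simpa using hs, fun h =>
      ne_neg_of_mem_unit_sphere ℝ ⟨s, hs'⟩ (Subtype.ext h)⟩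
  exact Set.Infinite.of_accPt
    (((isPreconnected_sphere hE 0 1).preperfect_of_nontrivial hnt s hs').nhds_inter hU)

namespace HypPolyhedron

section Closure

variable {n : ℕ} (P : HypPolyhedron n) {y : EuclideanSpace ℝ (Fin n)}

/-- The polyhedral cone in Minkowski space which cuts out the polyhedron. -/
def cone : Set (Fin (n + 1) → ℝ) := {x | ∀ i, mink (P.e i) x ≤ 0}

variable {P} in
lemma smul_mem_cone {r : ℝ} (hr : 0 ≤ r) {x : Fin (n + 1) → ℝ} (hx : x ∈ P.cone) :
    r • x ∈ P.cone := fun i => by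
  rw [mink_smul_right]
  exact mul_nonpos_of_nonneg_of_nonpos hr (hx i)

variable {P} in
lemma add_mem_cone {x x' : Fin (n + 1) → ℝ} (hx : x ∈ P.cone) (hx' : x' ∈ P.cone) :
    x + x' ∈ P.cone := fun i => by
  rw [mink_add_right]
  exact add_nonpos (hx i) (hx' i)

lemma mem_image_carrier : y ∈ kleinMap '' P.carrier ↔ ‖y‖ < 1 ∧ lift y ∈ P.cone := by
  constructor
  · rintro ⟨x, ⟨⟨hx, hx0⟩, hxP⟩, rfl⟩
    refine ⟨?_, lift_kleinMap hx0 ▸ smul_mem_cone (inv_pos.2 hx0).le hxP⟩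
    rw [← sq_lt_one_iff₀ (norm_nonneg _), norm_kleinMap_sq hx0, hx]
    linarith [pow_pos (inv_pos.2 hx0) 2]
  · rintro ⟨hy, hyP⟩
    have hy' : 0 < 1 - ‖y‖ ^ 2 := by
      linarith [(sq_lt_one_iff₀ (norm_nonneg y)).2 hy]
    have hr : 0 < (Real.sqrt (1 - ‖y‖ ^ 2))⁻¹ := inv_pos.2 (Real.sqrt_pos.2 hy')
    refine ⟨(Real.sqrt (1 - ‖y‖ ^ 2))⁻¹ • lift y, ⟨⟨?_, by simpa using hr⟩,
      smul_mem_cone hr.le hyP⟩, kleinMap_smul_lift y _ hr.ne'⟩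
    rw [mink_smul_left, mink_smul_right, mink_lift_lift, ← mul_assoc, ← mul_inv,
      Real.mul_self_sqrt hy'.le, inv_mul_eq_div, div_eq_iff hy'.ne']
    ring

lemma exists_forall_mink_lift_neg :
    ∃ p : EuclideanSpace ℝ (Fin n), ‖p‖ < 1 ∧ ∀ i, mink (P.e i) (lift p) < 0 := by
  obtain ⟨p, hp⟩ := P.nonempty_int
  have hp' := P.mem_image_carrier.1 (interior_subset hp)
  refine ⟨p, hp'.1, fun i => lt_of_le_of_ne (hp'.2 i) fun h0 => ?_⟩
  have hc : ContinuousAt (fun t : ℝ => p + t • spatial (P.e i)) 0 := by fun_prop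
  have hnhds := hc.preimage_mem_nhds (by simpa using mem_interior_iff_mem_nhds.1 hp)
  obtain ⟨t, ht, ht0⟩ := Filter.nonempty_of_mem (f := nhdsWithin (0 : ℝ) (Set.Ioi 0))
    (Filter.inter_mem (mem_nhdsWithin_of_mem_nhds hnhds) self_mem_nhdsWithin)
  have hle := (P.mem_image_carrier.1 ht).2 i
  rw [lift_add_smul, mink_add_right, mink_smul_right, mink_horizontal, h0, zero_add,
    real_inner_self_eq_norm_sq] at hle
  have hpos := norm_pos_iff.2 (spatial_ne_zero (x := P.e i) (by simp [P.unit i]))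
  exact hle.not_gt (mul_pos ht0 (pow_pos hpos 2))

lemma mem_cl : y ∈ P.cl ↔ ‖y‖ ≤ 1 ∧ lift y ∈ P.cone := by
  constructor
  · intro hy
    refine closure_minimal (fun y hy => ?_) (t := {y | ‖y‖ ≤ 1 ∧ lift y ∈ P.cone}) ?_ hy
    · exact ⟨(P.mem_image_carrier.1 hy).1.le, (P.mem_image_carrier.1 hy).2⟩
    · simp only [cone, Set.mem_ofPred_eq]
      rw [Set.ofPred_and, Set.ofPred_forall]
      exact (isClosed_le (by fun_prop) (by fun_prop)).inter
        (isClosed_iInter fun i => isClosed_le (by fun_prop) (by fun_prop))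
  · rintro ⟨hy, hyP⟩
    obtain ⟨p, hp, hpP⟩ := P.exists_forall_mink_lift_neg
    refine closure_mono ?_ (segment_subset_closure_openSegment (𝕜 := ℝ) (right_mem_segment ℝ p y))
    rintro _ ⟨a, b, ha, hb, hab, rfl⟩
    refine P.mem_image_carrier.2 ⟨?_, ?_⟩
    · calc ‖a • p + b • y‖ ≤ a * ‖p‖ + b * ‖y‖ := by
            refine (norm_add_le _ _).trans_eq ?_
            rw [norm_smul_of_nonneg ha.le, norm_smul_of_nonneg hb.le]
        _ < a * 1 + b * 1 := add_lt_add_of_lt_of_le (by gcongr) (by gcongr)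
        _ = 1 := by rw [mul_one, mul_one, hab]
    · rw [lift_convex _ _ hab]
      exact add_mem_cone (smul_mem_cone ha.le fun i => (hpP i).le) (smul_mem_cone hb.le hyP)

variable {P} in
lemma mem_verts_of_norm_eq_one (hy : y ∈ P.cl) (h1 : ‖y‖ = 1) : y ∈ P.verts := by
  refine fun _ => ⟨innerSL ℝ y, ?_⟩
  ext z
  simp only [Set.mem_singleton_iff, Set.mem_ofPred_eq, innerSL_apply_apply]
  have hyy : inner ℝ y y = 1 := by rw [real_inner_self_eq_norm_sq, h1, one_pow]
  constructor
  · rintro rfl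
    refine ⟨hy, fun w hw => (real_inner_le_norm z w).trans ?_⟩
    rw [hyy, h1, one_mul]
    exact (P.mem_cl.1 hw).1
  · rintro ⟨hz, hmax⟩
    have hzy : 1 ≤ inner ℝ y z := hyy ▸ hmax y hy
    have hz1 : ‖z‖ ^ 2 ≤ 1 := pow_le_one₀ (norm_nonneg _) (P.mem_cl.1 hz).1
    have hsub := norm_sub_sq_real z y
    rw [real_inner_comm, h1] at hsub
    rw [← sub_eq_zero, ← norm_eq_zero, ← sq_eq_zero_iff]
    exact le_antisymm (by linarith) (sq_nonneg _)

variable {P} in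
lemma finite_faces (hfv : P.FiniteVolume) (k : ℕ) : (P.faces k).Finite := by
  have hcomp : IsCompact P.cl :=
    (isCompact_closedBall (0 : EuclideanSpace ℝ (Fin n)) 1).of_isClosed_subset isClosed_closure
      fun y hy => by simpa using (P.mem_cl.1 hy).1
  have hconv : Convex ℝ P.cl := hfv.2 ▸ convex_convexHull ℝ _
  refine Set.Finite.of_finite_image (f := Set.extremePoints ℝ)
    (hfv.1.finite_subsets.subset ?_) fun F hF G hG hFG => ?_
  · rintro _ ⟨F, hF, rfl⟩
    refine hF.1.isExtreme.extremePoints_subset_extremePoints.trans ?_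
    rw [hfv.2]
    exact extremePoints_convexHull_subset
  · rw [← closure_convexHull_extremePoints (hF.1.isCompact hcomp) (hF.1.convex hconv),
      ← closure_convexHull_extremePoints (hG.1.isCompact hcomp) (hG.1.convex hconv)]
    exact congrArg (fun s => closure (convexHull ℝ s)) hFG

variable {P} in
lemma isExposed_of_mink_nonpos (v : Fin (n + 1) → ℝ) (hv : ∀ y ∈ P.cl, mink v (lift y) ≤ 0) :
    IsExposed ℝ P.cl {y ∈ P.cl | mink v (lift y) = 0} := by
  rintro ⟨q, hq, hq0⟩
  refine ⟨innerSL ℝ (spatial v), ?_⟩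
  ext y
  simp only [Set.mem_ofPred_eq, innerSL_apply_apply, and_congr_right_iff]
  simp only [mink_lift] at *
  intro hy
  exact ⟨fun h w hw => by linarith [hv w hw], fun h => by linarith [h q hq, hv y hy]⟩

end Closure

section Causality

variable {n : ℕ} {P : HypPolyhedron n}

/-- The polyhedron is causal if its cone lies in the closed future light cone, so that the ball
plays no role in the description of `P.cl`. -/
def IsCausal (P : HypPolyhedron n) : Prop := ∀ x ∈ P.cone, x ≠ 0 → 0 < x 0 ∧ mink x x ≤ 0

/-- Otherwise the segment from `q` to an interior point crosses the unit sphere at an interior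
point of the cone, and there are infinitely many ideal vertices nearby. -/
lemma norm_le_one_of_lift_mem_cone (hn : 2 ≤ n) (hfin : P.verts.Finite)
    {q : EuclideanSpace ℝ (Fin n)} (hq : lift q ∈ P.cone) : ‖q‖ ≤ 1 := by
  by_contra! hq1
  obtain ⟨p, hp, hpP⟩ := P.exists_forall_mink_lift_neg
  have hc : ContinuousOn (fun t : ℝ => ‖(1 - t) • p + t • q‖) (Set.Icc 0 1) := by fun_prop
  obtain ⟨t, ⟨ht0, ht1⟩, ht⟩ := intermediate_value_Ioo zero_le_one hc
    (show (1 : ℝ) ∈ Set.Ioo _ _ by simpa using ⟨hp, hq1⟩)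
  have hU : {y | ∀ i, mink (P.e i) (lift y) < 0} ∈ nhds ((1 - t) • p + t • q) := by
    refine IsOpen.mem_nhds ?_ fun i => ?_
    · simp only [Set.ofPred_forall]
      exact isOpen_iInter_of_finite fun i => isOpen_lt (by fun_prop) (by fun_prop)
    · rw [lift_convex _ _ (by ring), mink_add_right, mink_smul_right, mink_smul_right]
      exact add_neg_of_neg_of_nonpos (mul_neg_of_pos_of_neg (by linarith) (hpP i))
        (mul_nonpos_of_nonneg_of_nonpos ht0.le (hq i))
  have hrank : 1 < Module.rank ℝ (EuclideanSpace ℝ (Fin n)) := by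
    rw [← Module.finrank_eq_rank, finrank_euclideanSpace_fin]
    exact_mod_cast hn
  refine infinite_inter_sphere hrank ht hU (hfin.subset ?_)
  rintro y ⟨hy, hy1⟩
  rw [mem_sphere_zero_iff_norm] at hy1
  exact mem_verts_of_norm_eq_one (P.mem_cl.2 ⟨hy1.le, fun i => (hy i).le⟩) hy1

lemma nonempty_index (hn : 2 ≤ n) (hfin : P.verts.Finite) : Nonempty (Fin P.m) := by
  by_contra! h
  have hnorm := norm_le_one_of_lift_mem_cone hn hfin
    (q := EuclideanSpace.single ⟨0, by omega⟩ 2) fun i => isEmptyElim i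
  norm_num at hnorm

lemma eq_zero_of_mem_cone_of_zero_eq_zero (hn : 2 ≤ n) (hfin : P.verts.Finite)
    {w : Fin (n + 1) → ℝ} (hw : w ∈ P.cone) (hw0 : w 0 = 0) : w = 0 := by
  refine ext_spatial hw0 (show spatial w = 0 from ?_)
  by_contra hne
  have hpos := norm_pos_iff.2 hne
  obtain ⟨p, hp, hpP⟩ := P.exists_forall_mink_lift_neg
  have hfar : ‖p + (3 / ‖spatial w‖) • spatial w‖ ≤ 1 := by
    apply norm_le_one_of_lift_mem_cone hn hfin
    rw [lift_add_smul, horizontal_spatial hw0]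
    exact add_mem_cone (fun i => (hpP i).le) (smul_mem_cone (by positivity) hw)
  have hsub := norm_sub_le (p + (3 / ‖spatial w‖) • spatial w) p
  rw [add_sub_cancel_left, norm_smul_of_nonneg (by positivity), div_mul_cancel₀ _ hpos.ne'] at hsub
  linarith

lemma isCausal (hn : 2 ≤ n) (hfin : P.verts.Finite) : P.IsCausal := fun x hx hx0 => by
  rcases lt_or_ge 0 (x 0) with hpos | hneg
  · refine ⟨hpos, ?_⟩
    have hnorm : ‖kleinMap x‖ ≤ 1 := norm_le_one_of_lift_mem_cone hn hfin
      (lift_kleinMap hpos ▸ smul_mem_cone (inv_pos.2 hpos).le hx)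
    have hsq := pow_le_one₀ (norm_nonneg _) hnorm (n := 2)
    rw [norm_kleinMap_sq hpos] at hsq
    exact nonpos_of_mul_nonpos_right (by linarith) (pow_pos (inv_pos.2 hpos) 2)
  obtain ⟨p, -, hpP⟩ := P.exists_forall_mink_lift_neg
  have hxp : x + (-x 0) • lift p = 0 := eq_zero_of_mem_cone_of_zero_eq_zero hn hfin
    (add_mem_cone hx (smul_mem_cone (neg_nonneg.2 hneg) fun i => (hpP i).le)) (by simp)
  rw [neg_smul, ← sub_eq_add_neg, sub_eq_zero] at hxp
  obtain ⟨i⟩ := nonempty_index hn hfin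
  have hxi := hx i
  rw [hxp, mink_smul_right] at hxi
  have hzero : x 0 = 0 := le_antisymm hneg (nonneg_of_mul_nonpos_left hxi (hpP i))
  exact absurd (by rw [hxp, hzero, zero_smul]) hx0

lemma IsCausal.kleinMap_mem_cl (hP : P.IsCausal) {x : Fin (n + 1) → ℝ} (hx : x ∈ P.cone)
    (hx0 : x ≠ 0) : kleinMap x ∈ P.cl := by
  obtain ⟨hpos, hxx⟩ := hP x hx hx0
  refine P.mem_cl.2 ⟨?_, lift_kleinMap hpos ▸ smul_mem_cone (inv_pos.2 hpos).le hx⟩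
  rw [← sq_le_one_iff₀ (norm_nonneg _), norm_kleinMap_sq hpos]
  linarith [mul_nonpos_of_nonneg_of_nonpos (sq_nonneg (x 0)⁻¹) hxx]

end Causality

section Faces

variable {n : ℕ} {P : HypPolyhedron n} {S : Finset (Fin P.m)} {x : Fin (n + 1) → ℝ}

/-- The part of `P.cl` lying on all the bounding hyperplanes with index in `S`. -/
def wallFace (P : HypPolyhedron n) (S : Finset (Fin P.m)) : Set (EuclideanSpace ℝ (Fin n)) :=
  {y ∈ P.cl | ∀ i ∈ S, mink (P.e i) (lift y) = 0}

/-- `x` is an interior point of the part of the cone lying on the bounding hyperplanes with index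
in `S`, relative to the intersection of these hyperplanes. -/
structure IsRelInterior (P : HypPolyhedron n) (S : Finset (Fin P.m)) (x : Fin (n + 1) → ℝ) :
    Prop where
  mink_eq_zero : ∀ i ∈ S, mink (P.e i) x = 0
  exists_add_smul_mem : ∀ d, (∀ i ∈ S, mink (P.e i) d = 0) → ∃ ε > (0 : ℝ), x + ε • d ∈ P.cone

lemma isRelInterior_of_forall_mink_neg {J : Finset (Fin P.m)}
    (hJ : ∀ v, (∀ i ∈ S, mink (P.e i) v = 0) → (∀ l ∈ J, mink (P.e l) v ≤ 0) → v ∈ P.cone)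
    (hxS : ∀ i ∈ S, mink (P.e i) x = 0) (hxJ : ∀ l ∈ J, mink (P.e l) x < 0) :
    P.IsRelInterior S x where
  mink_eq_zero := hxS
  exists_add_smul_mem d hd := by
    obtain ⟨ε, hε, hneg⟩ := exists_pos_forall_add_mul_neg J _ (fun l => mink (P.e l) d) hxJ
    refine ⟨ε, hε, hJ _ (fun i hi => ?_) fun l hl => ?_⟩
    · rw [mink_add_right, mink_smul_right, hxS i hi, hd i hi, mul_zero, add_zero]
    · rw [mink_add_right, mink_smul_right]
      exact (hneg l hl).le

namespace IsRelInterior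

lemma mem_cone (hx : P.IsRelInterior S x) : x ∈ P.cone := by
  obtain ⟨ε, -, h⟩ := hx.exists_add_smul_mem 0 fun i _ => mink_zero_right _
  simpa using h

lemma ne_zero (hx : P.IsRelInterior S x) (hP : P.IsCausal) (hS : S.card ≤ n) : x ≠ 0 := by
  rintro rfl
  obtain ⟨d, hd, hdS⟩ := exists_ne_zero_forall_mink_eq_zero (κ := S) (by simp; omega)
    fun i => P.e i
  have hpos : ∀ v, v ≠ 0 → (∀ i ∈ S, mink (P.e i) v = 0) → 0 < v 0 := fun v hv hvS => by
    obtain ⟨ε, hε, hmem⟩ := hx.exists_add_smul_mem v hvS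
    rw [zero_add] at hmem
    exact pos_of_mul_pos_right (hP _ hmem (smul_ne_zero hε.ne' hv)).1 hε.le
  have hd0 := hpos d hd fun i hi => hdS ⟨i, hi⟩
  have hnd0 := hpos (-d) (neg_ne_zero.2 hd) fun i hi => by
    rw [mink_neg_right, hdS ⟨i, hi⟩, neg_zero]
  exact lt_asymm hd0 (neg_pos.1 hnd0)

lemma kleinMap_mem_wallFace (hx : P.IsRelInterior S x) (hP : P.IsCausal) (hx0 : x ≠ 0) :
    kleinMap x ∈ P.wallFace S :=
  ⟨hP.kleinMap_mem_cl hx.mem_cone hx0, fun i hi =>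
    (mink_lift_kleinMap_eq_zero _ (hP x hx.mem_cone hx0).1).2 (hx.mink_eq_zero i hi)⟩

lemma vectorSpan_wallFace (hx : P.IsRelInterior S x) (hP : P.IsCausal) (hx0 : x ≠ 0) :
    vectorSpan ℝ (P.wallFace S) =
      (Submodule.span ℝ (Set.range fun i : S => spatial (P.e i)))ᗮ := by
  have hxpos := (hP x hx.mem_cone hx0).1
  apply le_antisymm
  · refine Submodule.isOrtho_span.2 ?_
    rintro _ ⟨y, hy, z, hz, rfl⟩ _ ⟨i, rfl⟩
    dsimp only
    rw [real_inner_comm, vsub_eq_sub, ← mink_horizontal, ← lift_sub, mink_sub_right, hy.2 i i.2,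
      hz.2 i i.2, sub_zero]
  · intro w hw
    have hwS : ∀ i ∈ S, mink (P.e i) (horizontal w) = 0 := fun i hi => by
      rw [mink_horizontal]
      exact hw _ (Submodule.subset_span ⟨⟨i, hi⟩, rfl⟩)
    obtain ⟨ε, hε, hmem⟩ := hx.exists_add_smul_mem _ hwS
    have hpos : 0 < (x + ε • horizontal w) 0 := by simpa using hxpos
    have hface : kleinMap (x + ε • horizontal w) ∈ P.wallFace S :=
      ⟨hP.kleinMap_mem_cl hmem fun h => hpos.ne' (congrFun h 0), fun i hi => by
        rw [mink_lift_kleinMap_eq_zero _ hpos, mink_add_right, mink_smul_right,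
          hx.mink_eq_zero i hi, hwS i hi, mul_zero, add_zero]⟩
    have hsub : w = (x 0 / ε) • (kleinMap (x + ε • horizontal w) -ᵥ kleinMap x) := by
      ext i
      simp only [kleinMap, horizontal, Pi.add_apply, Pi.smul_apply, Fin.cons_succ, smul_eq_mul,
        Fin.cons_zero, mul_zero, add_zero, vsub_eq_sub, PiLp.smul_apply, PiLp.sub_apply]
      field_simp
      ring
    rw [hsub]
    exact Submodule.smul_mem _ _
      (vsub_mem_vectorSpan ℝ hface (hx.kleinMap_mem_wallFace hP hx0))

end IsRelInterior

lemma linearIndepOn_spatial_comp {ι : Type*} {S : Set ι} {e : ι → Fin (n + 1) → ℝ}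
    (he : LinearIndepOn ℝ e S) (hx : ∀ i ∈ S, mink (e i) x = 0) (hx0 : x 0 ≠ 0) :
    LinearIndepOn ℝ (spatial ∘ e) S := by
  refine LinearIndependent.map he (Submodule.disjoint_def.2 fun v hv hv' => ?_)
  have hvx : mink v x = 0 := by
    refine Submodule.span_le (p := ((minkForm n).flip x).ker).2 ?_ hv
    rintro _ ⟨i, rfl⟩
    exact hx i i.2
  rw [LinearMap.mem_ker] at hv'
  rw [mink_eq, hv', inner_zero_left, add_zero, neg_eq_zero] at hvx
  exact ext_spatial ((mul_eq_zero.1 hvx).resolve_right hx0) hv'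

lemma wallFace_eq (S : Finset (Fin P.m)) :
    P.wallFace S = {y ∈ P.cl | mink (∑ i ∈ S, P.e i) (lift y) = 0} := by
  ext y
  refine and_congr_right fun hy => ?_
  rw [mink_sum_left, Finset.sum_eq_zero_iff_of_nonpos fun i _ => (P.mem_cl.1 hy).2 i]

lemma IsRelInterior.wallFace_mem_faces (hx : P.IsRelInterior S x) (hP : P.IsCausal)
    (hS : S.card ≤ n) (hli : LinearIndepOn ℝ P.e S) : P.wallFace S ∈ P.faces (n - S.card) := by
  have hx0 := hx.ne_zero hP hS
  refine ⟨?_, ⟨_, hx.kleinMap_mem_wallFace hP hx0⟩, ?_⟩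
  · rw [wallFace_eq]
    refine isExposed_of_mink_nonpos _ fun y hy => ?_
    rw [mink_sum_left]
    exact Finset.sum_nonpos fun i _ => (P.mem_cl.1 hy).2 i
  · have hspan := finrank_span_eq_card (linearIndepOn_spatial_comp hli hx.mink_eq_zero
      (hP x hx.mem_cone hx0).1.ne')
    have hsum := Submodule.finrank_add_finrank_orthogonal
      (Submodule.span ℝ (Set.range fun i : S => spatial (P.e i)))
    rw [sdim, hx.vectorSpan_wallFace hP hx0]
    simp only [Finset.coe_sort_coe, Fintype.card_coe, Function.comp_def] at hspan
    rw [hspan, finrank_euclideanSpace_fin] at hsum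
    omega

lemma faceInHyperplane_wallFace {i : Fin P.m} (hi : i ∈ S) :
    P.faceInHyperplane (P.e i) (P.wallFace S) := fun _ hz hzF =>
  (mink_lift_kleinMap_eq_zero _ hz.1.2).1 (hzF.2 i hi)

end Faces

section Irredundance

variable {n : ℕ} {P Q : HypPolyhedron n}

lemma cl_congr (h : Q.cone = P.cone) : Q.cl = P.cl :=
  congrArg (fun C => closure (kleinMap '' (Hyperboloid n ∩ C))) h

lemma faces_congr (h : Q.cone = P.cone) (k : ℕ) : Q.faces k = P.faces k := by
  rw [faces, cl_congr h, faces]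

lemma verts_congr (h : Q.cone = P.cone) : Q.verts = P.verts := by
  rw [verts, cl_congr h, verts]

lemma vInf_congr (h : Q.cone = P.cone) : Q.vInf = P.vInf := by
  rw [vInf, idealVerts, verts_congr h, vInf, idealVerts]

lemma FiniteVolume.congr (hP : P.FiniteVolume) (h : Q.cone = P.cone) : Q.FiniteVolume := by
  rwa [FiniteVolume, cl_congr h, verts_congr h]

lemma IsRightAngled.of_injective (hP : P.IsRightAngled) (h : Q.cone = P.cone)
    {f : Fin Q.m → Fin P.m} (hf : f.Injective) (he : ∀ i, Q.e i = P.e (f i)) :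
    Q.IsRightAngled := by
  have hcarrier : Q.carrier = P.carrier := congrArg (Hyperboloid n ∩ ·) h
  rintro i j hij ⟨F, hF, hi, hj⟩
  simp only [faceInHyperplane, hcarrier, he] at hi hj
  rw [he, he]
  exact hP _ _ (hf.ne hij) ⟨F, faces_congr h _ ▸ hF, hi, hj⟩

/-- No half-space of the description is redundant: each bounding hyperplane carries a point lying
strictly inside all the other half-spaces. -/
def IsIrredundant (P : HypPolyhedron n) : Prop :=
  ∀ i, ∃ y, mink (P.e i) y = 0 ∧ ∀ j, j ≠ i → mink (P.e j) y < 0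

lemma exists_isIrredundant (P : HypPolyhedron n) : ∃ Q : HypPolyhedron n,
    Q.cone = P.cone ∧ Q.IsIrredundant ∧
      ∃ f : Fin Q.m → Fin P.m, f.Injective ∧ ∀ i, Q.e i = P.e (f i) := by
  obtain ⟨p, -, hp⟩ := P.exists_forall_mink_lift_neg
  obtain ⟨J, -, hJ, hz⟩ := exists_irredundant_subsystem ⊤ Finset.univ
    (fun i => minkForm n (P.e i)) (p := lift p) trivial fun i _ => hp i
  have hcone : {x | ∀ i : Fin J.card, mink (P.e (J.orderEmbOfFin rfl i)) x ≤ 0} = P.cone := by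
    ext x
    refine ⟨fun hx i => hJ x trivial (fun l hl => ?_) i (Finset.mem_univ i), fun hx i => hx _⟩
    obtain ⟨i, rfl⟩ : l ∈ Set.range (J.orderEmbOfFin rfl) := by
      rwa [Finset.range_orderEmbOfFin]
    exact hx i
  refine ⟨⟨J.card, fun i => P.e (J.orderEmbOfFin rfl i), fun i => P.unit _, ?_⟩, hcone,
    fun i => ?_, J.orderEmbOfFin rfl, (J.orderEmbOfFin rfl).injective, fun _ => rfl⟩
  · convert P.nonempty_int using 3
    exact congrArg (Hyperboloid n ∩ ·) hcone
  · obtain ⟨z, -, hzi, hzJ⟩ := hz _ (J.orderEmbOfFin_mem rfl i)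
    exact ⟨z, hzi, fun j hj => hzJ _ (J.orderEmbOfFin_mem rfl j)
      ((J.orderEmbOfFin rfl).injective.ne hj)⟩

lemma e_ne_zero (P : HypPolyhedron n) (i : Fin P.m) : P.e i ≠ 0 := fun h => by
  simpa [h] using P.unit i

lemma IsIrredundant.linearIndepOn_pair (hirr : P.IsIrredundant) {i j : Fin P.m} (hij : i ≠ j) :
    LinearIndepOn ℝ P.e {i, j} := by
  rw [LinearIndepOn.pair_iff _ hij]
  intro a b hab
  obtain ⟨y, hiy, hy⟩ := hirr i
  obtain ⟨z, hjz, hz⟩ := hirr j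
  have hay := congrArg (mink · y) hab
  have haz := congrArg (mink · z) hab
  simp only [mink_add_left, mink_smul_left, mink_zero_left, hiy, hjz, mul_zero, zero_add,
    add_zero] at hay haz
  exact ⟨(mul_eq_zero.1 haz).resolve_right (hz i hij).ne,
    (mul_eq_zero.1 hay).resolve_right (hy j hij.symm).ne⟩

lemma IsIrredundant.le_a (hirr : P.IsIrredundant) (hn : 1 ≤ n) (hP : P.IsCausal)
    (hfv : P.FiniteVolume) : P.m ≤ P.a (n - 1) := by
  choose y hiy hy using hirr
  have hint : ∀ i, P.IsRelInterior {i} (y i) := fun i =>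
    isRelInterior_of_forall_mink_neg (J := Finset.univ.erase i)
      (fun v hv hvJ l => by
        obtain rfl | hl := eq_or_ne l i
        exacts [(hv l (by simp)).le, hvJ l (by simp [hl])])
      (by simpa using hiy i) fun l hl => hy i l (Finset.ne_of_mem_erase hl)
  have hy0 : ∀ i, y i ≠ 0 := fun i => (hint i).ne_zero hP (by simpa using hn)
  have hinj : Function.Injective fun i => P.wallFace {i} := fun i j hij => by
    by_contra hne
    have hmem : kleinMap (y i) ∈ P.wallFace {j} := by
      rw [← show P.wallFace {i} = P.wallFace {j} from hij]
      exact (hint i).kleinMap_mem_wallFace hP (hy0 i)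
    have hzero := (mink_lift_kleinMap_eq_zero _ (hP _ (hint i).mem_cone (hy0 i)).1).1
      (hmem.2 j (Finset.mem_singleton_self j))
    exact (hy i j fun h => hne h.symm).ne hzero
  calc P.m = (Set.range fun i => P.wallFace {i}).ncard := by
        rw [← Set.image_univ, Set.ncard_image_of_injective _ hinj, Set.ncard_univ, Nat.card_fin]
    _ ≤ P.a (n - 1) := Set.ncard_le_ncard (by
        rintro _ ⟨i, rfl⟩
        simpa using (hint i).wallFace_mem_faces hP (by simpa using hn)
          (by simpa using P.e_ne_zero i)) (finite_faces hfv _)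

end Irredundance

section Gram

variable {n : ℕ} {P : HypPolyhedron n} {i j : Fin P.m}

/-- Two bounding hyperplanes are either orthogonal or disjoint in hyperbolic space. -/
def IsGramRightAngled (P : HypPolyhedron n) : Prop :=
  ∀ i j, i ≠ j → mink (P.e i) (P.e j) = 0 ∨ mink (P.e i) (P.e j) ≤ -1

lemma IsRightAngled.mink_eq_zero (hra : P.IsRightAngled) (hn : 2 ≤ n) (hP : P.IsCausal)
    (hirr : P.IsIrredundant) (hij : i ≠ j) {x : Fin (n + 1) → ℝ}
    (hx : P.IsRelInterior {i, j} x) : mink (P.e i) (P.e j) = 0 := by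
  have hcard : ({i, j} : Finset (Fin P.m)).card = 2 := Finset.card_pair hij
  have hface := hx.wallFace_mem_faces hP (by rwa [hcard])
    (by simpa using hirr.linearIndepOn_pair hij)
  rw [hcard] at hface
  exact hra i j hij ⟨_, hface, faceInHyperplane_wallFace (by simp),
    faceInHyperplane_wallFace (by simp)⟩

lemma IsRightAngled.exists_forall_mink_eq_zero (hra : P.IsRightAngled) (hn : 2 ≤ n)
    (hP : P.IsCausal) (hirr : P.IsIrredundant) (i : Fin P.m) : ∃ J : Finset (Fin P.m),
    (∀ v, mink (P.e i) v = 0 → (∀ l ∈ J, mink (P.e l) v ≤ 0) → v ∈ P.cone) ∧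
      ∀ k ∈ J, mink (P.e i) (P.e k) = 0 := by
  obtain ⟨y, hiy, hy⟩ := hirr i
  obtain ⟨J, hJS, hJ, hz⟩ := exists_irredundant_subsystem (minkForm n (P.e i)).ker
    (Finset.univ.erase i) (fun l => minkForm n (P.e l)) hiy fun l hl =>
      hy l (Finset.ne_of_mem_erase hl)
  have hJ' : ∀ v, mink (P.e i) v = 0 → (∀ l ∈ J, mink (P.e l) v ≤ 0) → v ∈ P.cone := by
    intro v hv hvJ l
    obtain rfl | hl := eq_or_ne l i
    exacts [hv.le, hJ v hv hvJ l (by simp [hl])]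
  refine ⟨J, hJ', fun k hk => ?_⟩
  obtain ⟨z, hzi, hzk, hzJ⟩ := hz k hk
  refine hra.mink_eq_zero hn hP hirr (Finset.ne_of_mem_erase (hJS hk)).symm
    (isRelInterior_of_forall_mink_neg (J := J.erase k) (fun v hv hvJ => ?_)
      (x := z) (by simpa using ⟨hzi, hzk⟩) fun l hl =>
        hzJ l (Finset.mem_of_mem_erase hl) (Finset.ne_of_mem_erase hl))
  simp only [Finset.forall_mem_insert, Finset.mem_singleton, forall_eq] at hv
  refine hJ' v hv.1 fun l hl => ?_
  obtain rfl | hlk := eq_or_ne l k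
  exacts [hv.2.le, hvJ l (Finset.mem_erase.2 ⟨hlk, hl⟩)]

lemma IsRightAngled.mink_nonpos (hra : P.IsRightAngled) (hn : 2 ≤ n) (hP : P.IsCausal)
    (hirr : P.IsIrredundant) (hij : i ≠ j) : mink (P.e i) (P.e j) ≤ 0 := by
  obtain ⟨J, hJ, hJi⟩ := hra.exists_forall_mink_eq_zero hn hP hirr i
  by_contra! hpos
  obtain ⟨y, hjy, hy⟩ := hirr j
  have hproj : y - mink (P.e i) y • P.e i ∈ P.cone := by
    refine hJ _ (by simp [P.unit]) fun l hl => ?_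
    rw [mink_sub_right, mink_smul_right, mink_comm (P.e l) (P.e i), hJi l hl, mul_zero, sub_zero]
    exact (hy l fun h => hpos.ne' (hJi j (h ▸ hl))).le
  have hle := hproj j
  rw [mink_sub_right, mink_smul_right, hjy, zero_sub, neg_nonpos, mink_comm (P.e j)] at hle
  exact (mul_neg_of_neg_of_pos (hy i hij) hpos).not_ge hle

/-- If `-1 < ⟨eᵢ, eⱼ⟩ < 0`, the projection of an interior point to the two hyperplanes is an
interior point of a ridge. -/
lemma IsRightAngled.isGramRightAngled (hra : P.IsRightAngled) (hn : 2 ≤ n) (hP : P.IsCausal)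
    (hirr : P.IsIrredundant) : P.IsGramRightAngled := by
  intro i j hij
  by_contra! hg
  have hle : ∀ {k l}, k ≠ l → mink (P.e k) (P.e l) ≤ 0 := hra.mink_nonpos hn hP hirr
  obtain ⟨p, -, hp⟩ := P.exists_forall_mink_lift_neg
  set g := mink (P.e i) (P.e j) with hgdef
  set s := mink (P.e i) (lift p) with hsdef
  set t := mink (P.e j) (lift p) with htdef
  have hs : s < 0 := hp i
  have ht : t < 0 := hp j
  have hg0 : g ≤ 0 := hle hij
  have hji : mink (P.e j) (P.e i) = g := mink_comm _ _
  refine hg.1 (hra.mink_eq_zero hn hP hirr hij (isRelInterior_of_forall_mink_neg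
    (x := (1 - g ^ 2) • lift p - (s - g * t) • P.e i - (t - g * s) • P.e j)
    (J := Finset.univ \ {i, j}) (fun v hv hvJ l => ?_) ?_ fun l hl => ?_))
  · by_cases hl : l ∈ ({i, j} : Finset (Fin P.m))
    exacts [(hv l hl).le, hvJ l (by simpa using hl)]
  · simp only [Finset.forall_mem_insert, Finset.mem_singleton, forall_eq, mink_sub_right,
      mink_smul_right, P.unit, hji, ← hgdef, ← hsdef, ← htdef]
    constructor <;> ring
  · simp only [Finset.mem_sdiff, Finset.mem_univ, true_and, Finset.mem_insert,
      Finset.mem_singleton, not_or] at hl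
    simp only [mink_sub_right, mink_smul_right]
    have hpl : (1 - g ^ 2) * mink (P.e l) (lift p) < 0 :=
      mul_neg_of_pos_of_neg (by nlinarith) (hp l)
    have hil : 0 ≤ (s - g * t) * mink (P.e l) (P.e i) :=
      mul_nonneg_of_nonpos_of_nonpos (by nlinarith) (hle hl.1)
    have hjl : 0 ≤ (t - g * s) * mink (P.e l) (P.e j) :=
      mul_nonneg_of_nonpos_of_nonpos (by nlinarith) (hle hl.2)
    linarith

end Gram

section NullPairs

variable {n : ℕ} {P : HypPolyhedron n} {i j k l : Fin P.m} {x a b : Fin (n + 1) → ℝ}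
  {S : Finset (Fin P.m)}

lemma ne_of_mink_e_eq_zero (h : mink (P.e i) (P.e j) = 0) : i ≠ j := by
  rintro rfl
  exact one_ne_zero (P.unit i ▸ h)

lemma e_add_e_ne_zero (P : HypPolyhedron n) (i j : Fin P.m) : P.e i + P.e j ≠ 0 := fun h => by
  obtain ⟨p, -, hp⟩ := P.exists_forall_mink_lift_neg
  have hsum := congrArg (mink · (lift p)) h
  simp only [mink_add_left, mink_zero_left] at hsum
  exact (add_neg (hp i) (hp j)).ne hsum

lemma mink_e_add_e_self (i j : Fin P.m) :
    mink (P.e i + P.e j) (P.e i + P.e j) = 2 + 2 * mink (P.e i) (P.e j) := by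
  simp only [mink_add_left, mink_add_right, P.unit, mink_comm (P.e j) (P.e i)]
  ring

namespace IsGramRightAngled

lemma mink_nonpos (hG : P.IsGramRightAngled) (hij : i ≠ j) : mink (P.e i) (P.e j) ≤ 0 :=
  (hG i j hij).elim le_of_eq fun h => h.trans (by norm_num)

lemma mink_e_add_e_self_nonpos (hG : P.IsGramRightAngled) (hij : i ≠ j)
    (h : mink (P.e i) (P.e j) ≠ 0) : mink (P.e i + P.e j) (P.e i + P.e j) ≤ 0 := by
  rw [mink_e_add_e_self]
  linarith [(hG i j hij).resolve_left h]

lemma mink_eq_zero_of_timelike (hG : P.IsGramRightAngled) (hij : i ≠ j) (hx : mink x x < 0)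
    (hi : mink (P.e i) x = 0) (hj : mink (P.e j) x = 0) : mink (P.e i) (P.e j) = 0 := by
  by_contra h
  refine P.e_add_e_ne_zero i j (eq_zero_of_mink_timelike_eq_zero hx
    (hG.mink_e_add_e_self_nonpos hij h) ?_)
  rw [mink_comm, mink_add_left, hi, hj, add_zero]

/-- Project an interior point successively to the hyperplanes in `S`. -/
lemma exists_timelike_forall_notMem_mink_neg (hG : P.IsGramRightAngled)
    (hS : (S : Set (Fin P.m)).Pairwise fun i j => mink (P.e i) (P.e j) = 0) :
    ∃ w, mink w w < 0 ∧ (∀ i ∈ S, mink (P.e i) w = 0) ∧ ∀ l ∉ S, mink (P.e l) w < 0 := by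
  induction S using Finset.induction_on with
  | empty =>
    obtain ⟨p, hp1, hp⟩ := P.exists_forall_mink_lift_neg
    refine ⟨lift p, ?_, by simp, fun l _ => hp l⟩
    rw [mink_lift_lift, sub_neg, sq_lt_one_iff₀ (norm_nonneg p)]
    exact hp1
  | insert s S hs ih =>
    obtain ⟨w, hww, hwS, hwl⟩ := ih (hS.mono (by simp))
    have hsw := hwl s hs
    refine ⟨w - mink (P.e s) w • P.e s, ?_, fun i hi => ?_, fun l hl => ?_⟩
    · simp only [mink_sub_left, mink_sub_right, mink_smul_left, mink_smul_right, P.unit,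
        mink_comm w]
      nlinarith
    · rw [mink_sub_right, mink_smul_right]
      obtain rfl | hiS := Finset.mem_insert.1 hi
      · rw [P.unit, mul_one, sub_self]
      · rw [hwS i hiS, hS (by simp [hiS]) (by simp) (ne_of_mem_of_not_mem hiS hs), mul_zero,
          sub_zero]
    · rw [Finset.mem_insert, not_or] at hl
      rw [mink_sub_right, mink_smul_right]
      linarith [hwl l hl.2, mul_nonneg_of_nonpos_of_nonpos hsw.le (hG.mink_nonpos hl.1)]

end IsGramRightAngled

/-- `a` and `b` span the two isotropic rays at the ends of a line which runs in the bounding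
hyperplanes with index in `S` and passes strictly inside the other half-spaces at `a + b`. -/
structure IsNullPair (P : HypPolyhedron n) (S : Finset (Fin P.m)) (a b : Fin (n + 1) → ℝ) :
    Prop where
  mink_left_self : mink a a = 0
  mink_right_self : mink b b = 0
  mink_neg : mink a b < 0
  mink_left : ∀ i ∈ S, mink (P.e i) a = 0
  mink_right : ∀ i ∈ S, mink (P.e i) b = 0
  mink_add_neg : ∀ l ∉ S, mink (P.e l) (a + b) < 0

lemma IsGramRightAngled.exists_isNullPair (hG : P.IsGramRightAngled) (hcard : S.card < n)
    (hS : (S : Set (Fin P.m)).Pairwise fun i j => mink (P.e i) (P.e j) = 0) :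
    ∃ a b, P.IsNullPair S a b := by
  obtain ⟨w, hww, hwS, hwl⟩ := hG.exists_timelike_forall_notMem_mink_neg hS
  obtain ⟨u, hu, huS⟩ := exists_ne_zero_forall_mink_eq_zero (κ := Option S) (by simpa using hcard)
    fun s => s.elim w fun i => P.e i
  have hwu : mink w u = 0 := huS none
  have hSu : ∀ i ∈ S, mink (P.e i) u = 0 := fun i hi => huS (some ⟨i, hi⟩)
  have huu : 0 < mink u u := by
    by_contra! h
    exact hu (eq_zero_of_mink_timelike_eq_zero hww h hwu)
  set r := Real.sqrt (-mink w w / mink u u)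
  have hr : r ^ 2 * mink u u = -mink w w := by
    rw [Real.sq_sqrt (by apply div_nonneg <;> linarith), div_mul_cancel₀ _ huu.ne']
  refine ⟨w + r • u, w - r • u, ?_, ?_, ?_, fun i hi => ?_, fun i hi => ?_, fun l hl => ?_⟩
  · simp only [mink_add_left, mink_add_right, mink_smul_left, mink_smul_right, mink_comm u w, hwu]
    linarith
  · simp only [mink_sub_left, mink_sub_right, mink_smul_left, mink_smul_right, mink_comm u w, hwu]
    linarith
  · simp only [mink_add_left, mink_sub_right, mink_smul_left, mink_smul_right, mink_comm u w, hwu]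
    linarith
  · simp only [mink_add_right, mink_smul_right, hwS i hi, hSu i hi, mul_zero, add_zero]
  · simp only [mink_sub_right, mink_smul_right, hwS i hi, hSu i hi, mul_zero, sub_zero]
  · simp only [mink_add_right, mink_sub_right]
    linarith [hwl l hl]

namespace IsNullPair

lemma symm (h : P.IsNullPair S a b) : P.IsNullPair S b a where
  mink_left_self := h.mink_right_self
  mink_right_self := h.mink_left_self
  mink_neg := mink_comm a b ▸ h.mink_neg
  mink_left := h.mink_right
  mink_right := h.mink_left
  mink_add_neg := add_comm a b ▸ h.mink_add_neg

/-- The line towards `a` leaves the polyhedron through the wall `k`, which it crosses at a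
timelike point. -/
lemma exists_mink_pos (h : P.IsNullPair S a b) (hG : P.IsGramRightAngled) (ha : a ∉ P.cone) :
    ∃ k, (∀ i ∈ S, mink (P.e i) (P.e k) = 0) ∧ 0 < mink (P.e k) a := by
  obtain ⟨k, hka⟩ : ∃ k, 0 < mink (P.e k) a := by
    simpa only [cone, Set.mem_ofPred_eq, not_forall, not_le] using ha
  have hkS : k ∉ S := fun hk => hka.ne' (h.mink_left k hk)
  have hkb : mink (P.e k) b < 0 := by
    linarith [mink_add_right (P.e k) a b ▸ h.mink_add_neg k hkS]
  refine ⟨k, fun i hi => hG.mink_eq_zero_of_timelike (ne_of_mem_of_not_mem hi hkS)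
    (x := mink (P.e k) a • b - mink (P.e k) b • a) ?_ ?_ ?_, hka⟩
  · simp only [mink_sub_left, mink_sub_right, mink_smul_left, mink_smul_right,
      h.mink_left_self, h.mink_right_self, mink_comm b a]
    nlinarith [mul_pos_of_neg_of_neg (mul_neg_of_pos_of_neg hka hkb) h.mink_neg]
  · simp only [mink_sub_right, mink_smul_right, h.mink_left i hi, h.mink_right i hi, mul_zero,
      sub_zero]
  · simp only [mink_sub_right, mink_smul_right]
    ring

section Edge

variable (h : P.IsNullPair S a b) (hcard : S.card + 1 = n)
  (hS : (S : Set (Fin P.m)).Pairwise fun i j => mink (P.e i) (P.e j) = 0)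

include h hcard hS

lemma mink_mul_mink {v w : Fin (n + 1) → ℝ} (hv : ∀ i ∈ S, mink (P.e i) v = 0) :
    mink a b * mink v w = mink v a * mink w b + mink v b * mink w a := by
  have hzero : mink a b • v - mink v b • a - mink v a • b = 0 := by
    refine eq_zero_of_forall_mink_eq_zero (κ := S ⊕ Fin 2)
      (by simp only [Fintype.card_sum, Fintype.card_coe, Fintype.card_fin]; omega)
      (v := Sum.elim (fun i => P.e i) ![a, b]) (w := Sum.elim (fun i => P.e i) ![b, a]) ?_ ?_ ?_
    · rintro (i | s)
      · simp [P.unit]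
      · fin_cases s <;> simp [mink_comm b a, h.mink_neg.ne]
    · rintro (i | s) (i' | s') hne
      · exact hS i.2 i'.2 fun heq => hne (congrArg Sum.inl (Subtype.ext heq))
      · fin_cases s' <;> simp [h.mink_left i i.2, h.mink_right i i.2]
      · fin_cases s <;> simp [mink_comm a (P.e i'), mink_comm b (P.e i'), h.mink_left i' i'.2,
          h.mink_right i' i'.2]
      · fin_cases s <;> fin_cases s' <;> simp_all [h.mink_left_self, h.mink_right_self]
    · rintro (i | s)
      · simp [hv i i.2, h.mink_left i i.2, h.mink_right i i.2]
      · fin_cases s <;>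
          simp [h.mink_left_self, h.mink_right_self, mink_comm b a, mink_comm a v, mink_comm b v,
            mul_comm]
  have hw := congrArg (mink · w) hzero
  simp only [mink_sub_left, mink_smul_left, mink_zero_left, mink_comm a w, mink_comm b w] at hw
  linarith

lemma mink_mul_mink_neg (hk : ∀ i ∈ S, mink (P.e i) (P.e k) = 0) :
    mink (P.e k) a * mink (P.e k) b < 0 := by
  have hkk := h.mink_mul_mink hcard hS (w := P.e k) hk
  rw [P.unit] at hkk
  linarith [h.mink_neg]

lemma mink_ne_zero (hk : ∀ i ∈ S, mink (P.e i) (P.e k) = 0)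
    (hl : ∀ i ∈ S, mink (P.e i) (P.e l) = 0) : mink (P.e k) (P.e l) ≠ 0 := fun hkl => by
  have hmul := h.mink_mul_mink hcard hS (w := P.e l) hk
  rw [hkl, mul_zero] at hmul
  have hprod := mul_pos_of_neg_of_neg (h.mink_mul_mink_neg hcard hS hk)
    (h.mink_mul_mink_neg hcard hS hl)
  have hsq : mink (P.e k) a * mink (P.e k) b * (mink (P.e l) a * mink (P.e l) b) =
      -(mink (P.e k) a * mink (P.e l) b) ^ 2 := by
    linear_combination -(mink (P.e k) a * mink (P.e l) b) * hmul
  exact (hsq ▸ hprod).not_ge (neg_nonpos.2 (sq_nonneg _))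

lemma eq_of_mink_mul_mink_pos (hG : P.IsGramRightAngled)
    (hk : ∀ i ∈ S, mink (P.e i) (P.e k) = 0) (hl : ∀ i ∈ S, mink (P.e i) (P.e l) = 0)
    (hpos : 0 < mink (P.e k) a * mink (P.e l) a) : k = l := by
  by_contra hkl
  have hnonneg : 0 ≤ mink (P.e k) a * mink (P.e l) b + mink (P.e k) b * mink (P.e l) a := by
    rw [← h.mink_mul_mink hcard hS hk]
    exact mul_nonneg_of_nonpos_of_nonpos h.mink_neg.le (hG.mink_nonpos hkl)
  have hka : 0 < mink (P.e k) a ^ 2 := pow_two_pos_of_ne_zero (left_ne_zero_of_mul hpos.ne')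
  have hla : 0 < mink (P.e l) a ^ 2 := pow_two_pos_of_ne_zero (right_ne_zero_of_mul hpos.ne')
  nlinarith [mul_nonneg hpos.le hnonneg,
    mul_neg_of_pos_of_neg hka (h.mink_mul_mink_neg hcard hS hl),
    mul_neg_of_pos_of_neg hla (h.mink_mul_mink_neg hcard hS hk)]

end Edge

end IsNullPair

end NullPairs

section Cusps

variable {n : ℕ} {P : HypPolyhedron n} {i j k : Fin P.m} {o v a b : Fin (n + 1) → ℝ}
  {S : Finset (Fin P.m)}

/-- `o` spans an isotropic ray of the cone, that is, an ideal vertex. -/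
structure IsCusp (P : HypPolyhedron n) (o : Fin (n + 1) → ℝ) : Prop where
  mem_cone : o ∈ P.cone
  ne_zero : o ≠ 0
  mink_self : mink o o = 0

/-- The polyhedron has at most one cusp. -/
def CuspsCollinear (P : HypPolyhedron n) : Prop :=
  ∀ o o', P.IsCusp o → P.IsCusp o' → ∃ c : ℝ, o' = c • o

/-- The bounding hyperplanes through a cusp. -/
def cuspWalls (P : HypPolyhedron n) : Set (Fin P.m) :=
  {i | ∃ o, P.IsCusp o ∧ mink (P.e i) o = 0}

lemma IsCausal.cuspsCollinear (hP : P.IsCausal) (hfin : P.verts.Finite) (hv : P.vInf ≤ 1) :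
    P.CuspsCollinear := fun o o' ho ho' => by
  have hideal : ∀ {x}, P.IsCusp x → kleinMap x ∈ P.idealVerts := fun {x} hx => by
    have h1 : ‖kleinMap x‖ = 1 := by
      rw [← pow_eq_one_iff_of_nonneg (norm_nonneg _) two_ne_zero,
        norm_kleinMap_sq (hP x hx.mem_cone hx.ne_zero).1, hx.mink_self, mul_zero, add_zero]
    exact ⟨mem_verts_of_norm_eq_one (hP.kleinMap_mem_cl hx.mem_cone hx.ne_zero) h1, h1⟩
  have ho0 := (hP o' ho'.mem_cone ho'.ne_zero).1
  have hlift := congrArg lift ((Set.ncard_le_one (hfin.subset fun x hx => hx.1)).1 hv _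
    (hideal ho') _ (hideal ho))
  rw [lift_kleinMap ho0, lift_kleinMap (hP o ho.mem_cone ho.ne_zero).1,
    inv_smul_eq_iff₀ ho0.ne', smul_smul] at hlift
  exact ⟨_, hlift⟩

namespace CuspsCollinear

lemma mem_cuspWalls_iff (hC : P.CuspsCollinear) (ho : P.IsCusp o) :
    i ∈ P.cuspWalls ↔ mink (P.e i) o = 0 := by
  refine ⟨?_, fun h => ⟨o, ho, h⟩⟩
  rintro ⟨o', ho', h⟩
  obtain ⟨c, rfl⟩ := hC o' o ho' ho
  rw [mink_smul_right, h, mul_zero]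

lemma mink_eq_zero (hC : P.CuspsCollinear) {o' : Fin (n + 1) → ℝ} (ho : P.IsCusp o)
    (ho' : P.IsCusp o') : mink o o' = 0 := by
  obtain ⟨c, rfl⟩ := hC o o' ho ho'
  rw [mink_smul_right, ho.mink_self, mul_zero]

end CuspsCollinear

namespace IsNullPair

lemma isCusp (h : P.IsNullPair S a b) (ha : a ∈ P.cone) : P.IsCusp a :=
  ⟨ha, fun h0 => by simpa [h0] using h.mink_neg, h.mink_left_self⟩

lemma subset_cuspWalls (h : P.IsNullPair S a b) (ha : a ∈ P.cone) : ↑S ⊆ P.cuspWalls :=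
  fun i hi => ⟨a, h.isCusp ha, h.mink_left i hi⟩

lemma exists_forall_mink_eq_zero (h : P.IsNullPair S a b) (hG : P.IsGramRightAngled)
    (hC : P.CuspsCollinear) : ∃ k, ∀ i ∈ S, mink (P.e i) (P.e k) = 0 := by
  by_cases ha : a ∈ P.cone
  · have hb : b ∉ P.cone := fun hb =>
      h.mink_neg.ne (hC.mink_eq_zero (h.isCusp ha) (h.symm.isCusp hb))
    exact (h.symm.exists_mink_pos hG hb).imp fun k hk => hk.1
  · exact (h.exists_mink_pos hG ha).imp fun k hk => hk.1

end IsNullPair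

namespace IsCusp

lemma exists_isNullPair (ho : P.IsCusp o) (hG : P.IsGramRightAngled)
    (hS : (S : Set (Fin P.m)).Pairwise fun i j => mink (P.e i) (P.e j) = 0)
    (hoS : ∀ i ∈ S, mink (P.e i) o = 0) : ∃ t : ℝ, t ≠ 0 ∧ ∃ b, P.IsNullPair S (t • o) b := by
  obtain ⟨w, hww, hwS, hwl⟩ := hG.exists_timelike_forall_notMem_mink_neg hS
  have hwo : mink w o ≠ 0 := fun h =>
    ho.ne_zero (eq_zero_of_mink_timelike_eq_zero hww ho.mink_self.le h)
  set t := mink w w / (2 * mink w o)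
  have ht : 2 * (t * mink w o) = mink w w := by
    simp only [t]
    field_simp
  refine ⟨t, div_ne_zero hww.ne (mul_ne_zero two_ne_zero hwo), w - t • o, ?_, ?_, ?_,
    fun i hi => ?_, fun i hi => ?_, fun l hl => ?_⟩
  · simp only [mink_smul_left, mink_smul_right, ho.mink_self, mul_zero]
  · simp only [mink_sub_left, mink_sub_right, mink_smul_left, mink_smul_right, ho.mink_self,
      mink_comm o w]
    linarith
  · simp only [mink_sub_right, mink_smul_left, mink_smul_right, ho.mink_self, mink_comm o w]
    linarith
  · rw [mink_smul_right, hoS i hi, mul_zero]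
  · rw [mink_sub_right, mink_smul_right, hwS i hi, hoS i hi, mul_zero, sub_zero]
  · rw [add_sub_cancel]
    exact hwl l hl

/-- Otherwise a short step from `o` in the direction of `v` would stay in the cone and yield a
spacelike vector there. -/
lemma exists_mink_pos (ho : P.IsCusp o) (hP : P.IsCausal) (hov : mink o v = 0)
    (hvv : 0 < mink v v) : ∃ l, mink (P.e l) o = 0 ∧ 0 < mink (P.e l) v := by
  by_contra! hall
  obtain ⟨ε, hε, hneg⟩ := exists_pos_forall_add_mul_neg
    (Finset.univ.filter fun l => mink (P.e l) o < 0) (fun l => mink (P.e l) o)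
    (fun l => mink (P.e l) v) (fun l hl => (Finset.mem_filter.1 hl).2)
  have hmem : o + ε • v ∈ P.cone := fun l => by
    rw [mink_add_right, mink_smul_right]
    rcases (ho.mem_cone l).lt_or_eq with hl | hl
    · exact (hneg l (by simpa using hl)).le
    · rw [hl, zero_add]
      exact mul_nonpos_of_nonneg_of_nonpos hε.le (hall l hl)
  have hpos : 0 < mink (o + ε • v) (o + ε • v) := by
    simp only [mink_add_left, mink_add_right, mink_smul_left, mink_smul_right, ho.mink_self, hov,
      mink_comm v o]
    linarith [mul_pos hε (mul_pos hε hvv)]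
  refine (hP _ hmem fun h0 => ?_).2.not_gt hpos
  rw [h0, mink_zero_left] at hpos
  exact lt_irrefl _ hpos

/-- The bounding hyperplanes are tangent at the cusp, where two causal vectors orthogonal to each
other have to be collinear. -/
lemma e_add_e_eq_smul (ho : P.IsCusp o) (hP : P.IsCausal) (hG : P.IsGramRightAngled)
    (hi : mink (P.e i) o = 0) (hj : mink (P.e j) o = 0) (hij : i ≠ j)
    (hne : mink (P.e i) (P.e j) ≠ 0) : ∃ c : ℝ, c ≠ 0 ∧ P.e i + P.e j = c • o := by
  have hsmul := smul_eq_smul_of_causal ho.mink_self.le (hG.mink_e_add_e_self_nonpos hij hne)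
    (by rw [mink_comm, mink_add_left, hi, hj, add_zero])
  rw [← eq_inv_smul_iff₀ (hP o ho.mem_cone ho.ne_zero).1.ne', smul_smul] at hsmul
  refine ⟨_, fun h0 => P.e_add_e_ne_zero i j ?_, hsmul⟩
  rw [hsmul, h0, zero_smul]

lemma mink_add_mink_eq_zero (ho : P.IsCusp o) (hP : P.IsCausal) (hG : P.IsGramRightAngled)
    (hi : mink (P.e i) o = 0) (hj : mink (P.e j) o = 0) (hij : i ≠ j)
    (hne : mink (P.e i) (P.e j) ≠ 0) (hv : mink v o = 0) :
    mink v (P.e i) + mink v (P.e j) = 0 := by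
  obtain ⟨c, -, hc⟩ := ho.e_add_e_eq_smul hP hG hi hj hij hne
  rw [← mink_add_right, hc, mink_smul_right, hv, mul_zero]

lemma exists_opposite (ho : P.IsCusp o) (hP : P.IsCausal) (hi : mink (P.e i) o = 0) :
    ∃ k, mink (P.e k) o = 0 ∧ i ≠ k ∧ mink (P.e i) (P.e k) ≠ 0 := by
  obtain ⟨k, hko, hki⟩ := ho.exists_mink_pos hP (v := -P.e i)
    (by rw [mink_neg_right, mink_comm, hi, neg_zero]) (by simp [P.unit])
  rw [mink_neg_right, Left.neg_pos_iff, mink_comm] at hki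
  refine ⟨k, hko, ?_, hki.ne⟩
  rintro rfl
  exact hki.not_gt (P.unit i ▸ one_pos)

lemma opposite_unique (ho : P.IsCusp o) (hP : P.IsCausal) (hG : P.IsGramRightAngled)
    (hi : mink (P.e i) o = 0) (hj : mink (P.e j) o = 0) (hk : mink (P.e k) o = 0)
    (hij : i ≠ j) (hik : i ≠ k) (hnij : mink (P.e i) (P.e j) ≠ 0)
    (hnik : mink (P.e i) (P.e k) ≠ 0) : j = k := by
  by_contra hjk
  have hsum := ho.mink_add_mink_eq_zero hP hG hi hj hij hnij hk
  exact hnik (by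
    rw [mink_comm]
    linarith [hG.mink_nonpos hik.symm, hG.mink_nonpos (Ne.symm hjk)])

lemma exists_mink_eq_zero (ho : P.IsCusp o) (hn : 2 < n) (hP : P.IsCausal)
    (hG : P.IsGramRightAngled) (hi : mink (P.e i) o = 0) :
    ∃ j, mink (P.e j) o = 0 ∧ mink (P.e i) (P.e j) = 0 := by
  obtain ⟨d, hd, hd0, hdo⟩ := exists_ne_zero_zero_eq_zero_forall_mink_eq_zero (κ := Fin 2)
    (by simpa using hn) ![P.e i, o]
  have hid : mink (P.e i) d = 0 := hdo 0
  have hod : mink o d = 0 := hdo 1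
  obtain ⟨j, hjo, hjd⟩ := ho.exists_mink_pos hP hod <| by
    by_contra! hdd
    exact hd (eq_zero_of_mink_self_nonpos hd0 hdd)
  refine ⟨j, hjo, ?_⟩
  by_contra hne
  have hij : i ≠ j := by
    rintro rfl
    exact hjd.ne' hid
  obtain ⟨c, -, hc⟩ := ho.e_add_e_eq_smul hP hG hi hjo hij hne
  have hsum := congrArg (mink · d) hc
  simp only [mink_add_left, mink_smul_left, hid, hod, mul_zero, zero_add] at hsum
  exact hjd.ne' hsum

end IsCusp

end Cusps

section WallGraph

variable {n : ℕ} {P : HypPolyhedron n} {i j k l : Fin P.m}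

/-- Adjacency of bounding hyperplanes: orthogonality of their normals. -/
def wallGraph (P : HypPolyhedron n) : SimpleGraph (Fin P.m) where
  Adj i j := mink (P.e i) (P.e j) = 0
  symm := ⟨fun i j h => mink_comm (P.e i) (P.e j) ▸ h⟩
  loopless := ⟨fun _ h => ne_of_mink_e_eq_zero h rfl⟩

lemma pairwise_of_wallGraph_adj (hij : P.wallGraph.Adj i j) :
    ((({i, j} : Finset (Fin P.m)) : Set (Fin P.m)).Pairwise
      fun i j => mink (P.e i) (P.e j) = 0) := by
  rw [Finset.coe_pair, Set.pairwise_pair]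
  exact fun _ => ⟨hij, hij.symm⟩

lemma mem_commonNeighbors_iff : k ∈ P.wallGraph.commonNeighbors i j ↔
    ∀ s ∈ ({i, j} : Finset (Fin P.m)), mink (P.e s) (P.e k) = 0 := by
  simp only [Finset.forall_mem_insert, Finset.mem_singleton, forall_eq]
  rfl

lemma exists_isNullPair_of_adj (hG : P.IsGramRightAngled) (hn : 2 < n)
    (hij : P.wallGraph.Adj i j) : ∃ a b, P.IsNullPair {i, j} a b :=
  hG.exists_isNullPair (by rwa [Finset.card_pair hij.ne]) (pairwise_of_wallGraph_adj hij)

lemma exists_wallGraph_adj (hG : P.IsGramRightAngled) (hC : P.CuspsCollinear) (hn : 1 < n)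
    (i : Fin P.m) : ∃ j, P.wallGraph.Adj i j := by
  obtain ⟨a, b, h⟩ := hG.exists_isNullPair (S := {i}) (by simpa using hn) (by simp)
  exact (h.exists_forall_mink_eq_zero hG hC).imp fun k hk => hk i (Finset.mem_singleton_self i)

/-- Either end of the edge lies on a third wall. -/
lemma nontrivial_commonNeighbors (hG : P.IsGramRightAngled) (hn : 2 < n)
    (hij : P.wallGraph.Adj i j) (hnot : ¬ (i ∈ P.cuspWalls ∧ j ∈ P.cuspWalls)) :
    (P.wallGraph.commonNeighbors i j).Nontrivial := by
  obtain ⟨a, b, h⟩ := exists_isNullPair_of_adj hG hn hij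
  have hnotMem : ∀ {x y}, P.IsNullPair {i, j} x y → x ∉ P.cone := fun h' hx =>
    hnot ⟨h'.subset_cuspWalls hx (by simp), h'.subset_cuspWalls hx (by simp)⟩
  obtain ⟨k, hk, hka⟩ := h.exists_mink_pos hG (hnotMem h)
  obtain ⟨l, hl, hlb⟩ := h.symm.exists_mink_pos hG (hnotMem h.symm)
  refine ⟨k, mem_commonNeighbors_iff.2 hk, l, mem_commonNeighbors_iff.2 hl, ?_⟩
  rintro rfl
  have hkS : k ∉ ({i, j} : Finset (Fin P.m)) := fun hkS => ne_of_mink_e_eq_zero (hk k hkS) rfl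
  linarith [mink_add_right (P.e k) a b ▸ h.mink_add_neg k hkS]

lemma mem_cuspWalls_of_isInducedSquare (hG : P.IsGramRightAngled)
    (h : IsInducedSquare P.wallGraph i j k l) : i ∈ P.cuspWalls := by
  have hij : mink (P.e i) (P.e j) = 0 := h.adj_ab
  have hjk : mink (P.e j) (P.e k) = 0 := h.adj_bc
  have hkl : mink (P.e k) (P.e l) = 0 := h.adj_cd
  have hli : mink (P.e l) (P.e i) = 0 := h.adj_da
  have hik : mink (P.e i) (P.e k) = -1 := by
    refine ((hG i k h.ne_ac).resolve_left h.not_adj_ac).antisymm ?_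
    by_contra! hlt
    refine P.e_add_e_ne_zero j l (eq_zero_of_mink_timelike_eq_zero (x := P.e i + P.e k) ?_
      (hG.mink_e_add_e_self_nonpos h.ne_bd h.not_adj_bd) ?_)
    · rw [mink_e_add_e_self]
      linarith
    · simp only [mink_add_left, mink_add_right, mink_comm (P.e k) (P.e j),
        mink_comm (P.e i) (P.e l), hij, hjk, hkl, hli, add_zero]
  have hi : mink (P.e i) (P.e i + P.e k) = 0 := by
    rw [mink_add_right, P.unit, hik, add_neg_cancel]
  have hk : mink (P.e k) (P.e i + P.e k) = 0 := by
    rw [mink_add_right, P.unit, mink_comm, hik, neg_add_cancel]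
  refine ⟨P.e i + P.e k, ⟨fun s => ?_, P.e_add_e_ne_zero i k, ?_⟩, hi⟩
  · obtain rfl | hsi := eq_or_ne s i
    · exact hi.le
    obtain rfl | hsk := eq_or_ne s k
    · exact hk.le
    rw [mink_add_right]
    exact add_nonpos (hG.mink_nonpos hsi) (hG.mink_nonpos hsk)
  · rw [mink_add_left, hi, hk, add_zero]

lemma commonNeighbors_subset_cuspWalls (hP : P.IsCausal) (hG : P.IsGramRightAngled)
    (hC : P.CuspsCollinear) (hi : i ∈ P.cuspWalls) (hj : j ∈ P.cuspWalls) (hij : i ≠ j)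
    (hnij : ¬ P.wallGraph.Adj i j) : P.wallGraph.commonNeighbors i j ⊆ P.cuspWalls := by
  rintro k hk
  have hki := mem_commonNeighbors_iff.1 hk i (by simp)
  have hkj := mem_commonNeighbors_iff.1 hk j (by simp)
  obtain ⟨o, ho, hio⟩ := hi
  obtain ⟨c, hc0, hc⟩ := ho.e_add_e_eq_smul hP hG hio ((hC.mem_cuspWalls_iff ho).1 hj) hij hnij
  have hko := congrArg (mink (P.e k)) hc
  rw [mink_add_right, mink_smul_right, mink_comm (P.e k) (P.e i), mink_comm (P.e k) (P.e j), hki,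
    hkj, add_zero, eq_comm, mul_eq_zero] at hko
  exact ⟨o, ho, hko.resolve_left hc0⟩

section Three

variable {P : HypPolyhedron 3} {i j k : Fin P.m} {o : Fin (3 + 1) → ℝ}

lemma isIndepSet_commonNeighbors (hG : P.IsGramRightAngled) (hij : P.wallGraph.Adj i j) :
    P.wallGraph.IsIndepSet (P.wallGraph.commonNeighbors i j) := fun k hk l hl _ => by
  obtain ⟨a, b, h⟩ := exists_isNullPair_of_adj hG (by norm_num) hij
  exact h.mink_ne_zero (by rw [Finset.card_pair hij.ne]) (pairwise_of_wallGraph_adj hij)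
    (mem_commonNeighbors_iff.1 hk) (mem_commonNeighbors_iff.1 hl)

lemma IsCusp.not_adj_of_adj (ho : P.IsCusp o) (hG : P.IsGramRightAngled)
    (hi : mink (P.e i) o = 0) (hj : mink (P.e j) o = 0) (hk : mink (P.e k) o = 0)
    (hij : P.wallGraph.Adj i j) (hik : P.wallGraph.Adj i k) : ¬ P.wallGraph.Adj j k := fun hjk => by
  obtain ⟨t, -, b, h⟩ := ho.exists_isNullPair hG (pairwise_of_wallGraph_adj hij) (by simp [hi, hj])
  have hneg := h.mink_mul_mink_neg (by rw [Finset.card_pair hij.ne])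
    (pairwise_of_wallGraph_adj hij) (mem_commonNeighbors_iff.1 ⟨hik, hjk⟩)
  rw [mink_smul_right, hk, mul_zero, zero_mul] at hneg
  exact lt_irrefl _ hneg

/-- One end of the edge is the cusp, so all further walls through it lie at the other end. -/
lemma existsUnique_commonNeighbor (hG : P.IsGramRightAngled) (hC : P.CuspsCollinear)
    (hij : P.wallGraph.Adj i j) (hi : i ∈ P.cuspWalls) (hj : j ∈ P.cuspWalls) :
    ∃! k, k ∈ P.wallGraph.commonNeighbors i j := by
  obtain ⟨o, ho, hio⟩ := hi
  have hpair := pairwise_of_wallGraph_adj hij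
  have hcard : ({i, j} : Finset (Fin P.m)).card + 1 = 3 := by rw [Finset.card_pair hij.ne]
  obtain ⟨t, ht, b, h⟩ := ho.exists_isNullPair hG hpair
    (by simp [hio, (hC.mem_cuspWalls_iff ho).1 hj])
  obtain ⟨k, hk⟩ := h.exists_forall_mink_eq_zero hG hC
  refine ⟨k, mem_commonNeighbors_iff.2 hk, fun l hl => ?_⟩
  replace hl := mem_commonNeighbors_iff.1 hl
  have hneg : ∀ {s}, (∀ i' ∈ ({i, j} : Finset (Fin P.m)), mink (P.e i') (P.e s) = 0) →
      mink (P.e s) o < 0 := fun {s} hs => (ho.mem_cone s).lt_of_ne fun h0 => by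
    have hmul := h.mink_mul_mink_neg hcard hpair hs
    rw [mink_smul_right, h0, mul_zero, zero_mul] at hmul
    exact lt_irrefl _ hmul
  refine h.eq_of_mink_mul_mink_pos hcard hpair hG hl hk ?_
  rw [mink_smul_right, mink_smul_right, mul_mul_mul_comm]
  exact mul_pos (mul_self_pos.2 ht) (mul_pos_of_neg_of_neg (hneg hl) (hneg hk))

lemma exists_isInducedSquare_cuspWalls (hP : P.IsCausal) (hG : P.IsGramRightAngled)
    (hC : P.CuspsCollinear) (hne : P.cuspWalls.Nonempty) :
    ∃ a b c d, IsInducedSquare P.wallGraph a b c d ∧ P.cuspWalls = {a, b, c, d} := by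
  obtain ⟨i, o, ho, hi⟩ := hne
  obtain ⟨j, hj, hij⟩ := ho.exists_mink_eq_zero (by norm_num) hP hG hi
  obtain ⟨k, hk, hik, hnik⟩ := ho.exists_opposite hP hi
  obtain ⟨l, hl, hjl, hnjl⟩ := ho.exists_opposite hP hj
  have hji : mink (P.e j) (P.e i) = 0 := mink_comm (P.e i) (P.e j) ▸ hij
  have hjk : mink (P.e j) (P.e k) = 0 := by
    linarith [ho.mink_add_mink_eq_zero hP hG hi hk hik hnik hj]
  have hil : mink (P.e i) (P.e l) = 0 := by
    linarith [ho.mink_add_mink_eq_zero hP hG hj hl hjl hnjl hi]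
  have hkl : mink (P.e k) (P.e l) = 0 := by
    linarith [ho.mink_add_mink_eq_zero hP hG hj hl hjl hnjl hk, mink_comm (P.e k) (P.e j)]
  have hli : mink (P.e l) (P.e i) = 0 := mink_comm (P.e i) (P.e l) ▸ hil
  refine ⟨i, j, k, l, ⟨hij, hjk, hkl, hli, hik, hjl, hnik, hnjl⟩, Set.Subset.antisymm ?_ ?_⟩
  · intro x hx
    have hxo := (hC.mem_cuspWalls_iff ho).1 hx
    by_contra! hx'
    simp only [Set.mem_insert_iff, Set.mem_singleton_iff, not_or] at hx'
    obtain ⟨hxi, hxj, hxk, hxl⟩ := hx'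
    refine ho.not_adj_of_adj hG hi hj hxo hij ?_ ?_
    · by_contra hnix
      exact hxk (ho.opposite_unique hP hG hi hxo hk (Ne.symm hxi) hik hnix hnik)
    · by_contra hnjx
      exact hxl (ho.opposite_unique hP hG hj hxo hl (Ne.symm hxj) hjl hnjx hnjl)
  · simp only [Set.insert_subset_iff, Set.singleton_subset_iff, hC.mem_cuspWalls_iff ho]
    exact ⟨hi, hj, hk, hl⟩

theorem rightAngledPattern_wallGraph (hP : P.IsCausal) (hG : P.IsGramRightAngled)
    (hC : P.CuspsCollinear) : RightAngledPattern P.wallGraph P.cuspWalls where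
  exists_adj := exists_wallGraph_adj hG hC (by norm_num)
  nontrivial_commonNeighbors := nontrivial_commonNeighbors hG (by norm_num)
  existsUnique_commonNeighbor := existsUnique_commonNeighbor hG hC
  isIndepSet_commonNeighbors := isIndepSet_commonNeighbors hG
  mem_of_isInducedSquare := mem_cuspWalls_of_isInducedSquare hG
  commonNeighbors_subset := commonNeighbors_subset_cuspWalls hP hG hC
  exists_isInducedSquare := exists_isInducedSquare_cuspWalls hP hG hC

end Three

end WallGraph

end HypPolyhedron

/-- A finite-volume right-angled convex hyperbolic `3`-polyhedron with at most one ideal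
vertex has at least `12` faces. -/
theorem faces_of_3_polyhedron_with_at_most_one_cusp (P : HypPolyhedron 3)
    (hfv : P.FiniteVolume) (hra : P.IsRightAngled) (hv : P.vInf ≤ 1) :
    12 ≤ P.a 2 := by
  obtain ⟨Q, hcone, hirr, f, hf, he⟩ := P.exists_isIrredundant
  have hfvQ : Q.FiniteVolume := hfv.congr hcone
  have hP : Q.IsCausal := HypPolyhedron.isCausal (by norm_num) hfvQ.1
  have hG : Q.IsGramRightAngled :=
    (hra.of_injective hcone hf he).isGramRightAngled (by norm_num) hP hirr
  have hC : Q.CuspsCollinear := hP.cuspsCollinear hfvQ.1 (HypPolyhedron.vInf_congr hcone ▸ hv)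
  have : Nonempty (Fin Q.m) := HypPolyhedron.nonempty_index (by norm_num) hfvQ.1
  calc 12 ≤ Fintype.card (Fin Q.m) :=
        (HypPolyhedron.rightAngledPattern_wallGraph hP hG hC).twelve_le_card
    _ = Q.m := Fintype.card_fin _
    _ ≤ Q.a 2 := hirr.le_a (by norm_num) hP hfvQ
    _ = P.a 2 := by rw [HypPolyhedron.a, HypPolyhedron.faces_congr hcone, HypPolyhedron.a]
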